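/- arXiv:1411.6963 — 3 statements merged into one kernel-verified Lean document; each statement's English description precedes it below -/
import Mathlib

section
/- A nonnegative integer n can be written as x² + 4·(y² + y·z + z²) with x, y, z ∈ ℤ if and only if n is not of the form 4·l + 2, not of the form 4·l + 3, and not of the form 9^k·(9·l + 6), for nonnegative integers k and l. -/
/-!
The form `X² + Y² + YZ + Z²` is alone in its genus: an integral positive definite ternary form whose
polar form has determinant `6` takes only values of `X² + Y² + YZ + Z²`. Indeed a Hermite reduced
basis of such a form starts with a vector of norm `a` such that `27 a³ ≤ 8 · 6`, hence `a = 1`, and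
the other coefficients are then forced. By parity these values are the integers `x² + y² + 3z²`.

To represent `n` with `3 ∤ n` or `n ≡ 3 (mod 9)` it thus suffices to find a form of determinant `6`
having `n` as a diagonal coefficient. Dirichlet's theorem supplies a prime `p` with
`w² p = 4nE - 3`, where `w ∈ {1, 3}` and `E ≡ 1 (mod 6)`; then `(p/E) = (-3/E) = 1`, so by
reciprocity `-E` is a square `g²` modulo `p`, and `((E + g²)/p) x² + p y² + n z² + w xz + 2g xy` is
such a form. Multiples of `9` follow by scaling. Finally `x² + 4(y² + yz + z²)` is
`x² + (2y + z)² + 3z²`, and when `x² + u² + 3v²` is `0` or `1` modulo `4`, either `u` or `x` has the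
parity of `v`.
-/

open QuadraticMap Module

section Bases

variable {R M : Type*} [CommRing R] [AddCommGroup M] [Module R M]

lemma exists_basis_eq_update_add_smul {ι : Type*} [DecidableEq ι] (b : Basis ι R M) {i j : ι}
    (hij : i ≠ j) (r : R) : ∃ b' : Basis ι R M, ⇑b' = Function.update b i (b i + r • b j) := by
  refine ⟨b.map (LinearEquiv.transvection (f := b.coord i) (v := r • b j) (by simp [hij])), ?_⟩
  ext m
  rcases eq_or_ne m i with rfl | hm
  · simp [LinearMap.transvection.apply]
  · simp [LinearMap.transvection.apply, hm]

lemma exists_basis_eq_unitriangular (b : Basis (Fin 3) R M) (k l t : R) :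
    ∃ b' : Basis (Fin 3) R M, ⇑b' = ![b 0, b 1 + k • b 0, b 2 + t • b 1 + l • b 0] := by
  obtain ⟨b₁, h₁⟩ := exists_basis_eq_update_add_smul b (i := 2) (j := 1) (by decide) t
  obtain ⟨b₂, h₂⟩ := exists_basis_eq_update_add_smul b₁ (i := 2) (j := 0) (by decide) l
  obtain ⟨b₃, h₃⟩ := exists_basis_eq_update_add_smul b₂ (i := 1) (j := 0) (by decide) k
  refine ⟨b₃, ?_⟩
  ext m
  fin_cases m <;> simp [h₁, h₂, h₃]

end Bases

lemma exists_two_mul_abs_add_mul_le (x : ℤ) {m : ℤ} (hm : 0 < m) :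
    ∃ t : ℤ, 2 * |x + t * m| ≤ m := by
  lift m to ℕ using hm.le
  have hm' : 0 < m := by exact_mod_cast hm
  refine ⟨-x.bdiv m, ?_⟩
  rw [neg_mul, ← sub_eq_add_neg, ← Int.bmod_eq_self_sub_bdiv_mul]
  have := Int.le_bmod (x := x) hm'
  have := Int.bmod_le (x := x) hm'
  have : |x.bmod m| ≤ m / 2 := abs_le.mpr ⟨by omega, by omega⟩
  omega

section Reduction

section GramDet

variable {R M : Type*} [CommRing R] [AddCommGroup M] [Module R M]

/-- The determinant of the Gram matrix of a family of vectors for the polar form of `Q`. The polar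
form is used rather than the associated bilinear form because the latter needs a division by `2`. -/
def gramDet {ι : Type*} [Fintype ι] [DecidableEq ι] (Q : QuadraticForm R M) (v : ι → M) : R :=
  (Matrix.of fun i j => polar Q (v i) (v j)).det

/-- The polar form of `Q` on the components of `v` and `w` orthogonal to `u`, multiplied by `2 Q u`
to make it integral. -/
def projPolar (Q : QuadraticForm R M) (u v w : M) : R :=
  2 * Q u * polar Q v w - polar Q u v * polar Q u w

/-- The quantity minimized by Hermite reduction of a ternary form: up to a factor, the product of
the covolumes squared of the first two lattices in the flag spanned by `v`. -/
def flagPotential (Q : QuadraticForm R M) (v : Fin 3 → M) : R :=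
  Q (v 0) * projPolar Q (v 0) (v 1) (v 1)

variable (Q : QuadraticForm R M)

lemma projPolar_self (u v : M) :
    projPolar Q u v v = 4 * Q u * Q v - polar Q u v ^ 2 := by
  rw [projPolar, polar_self, nsmul_eq_mul]
  push_cast
  ring

lemma projPolar_self_comm (u v : M) : projPolar Q u v v = projPolar Q v u u := by
  rw [projPolar_self, projPolar_self, polar_comm]
  ring

lemma projPolar_add_smul_add_smul (u v w : M) (k l : R) :
    projPolar Q u (v + k • u) (w + l • u) = projPolar Q u v w := by
  simp only [projPolar, polar_add_left, polar_add_right, polar_smul_left, polar_smul_right,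
    polar_self, polar_comm Q v u, smul_eq_mul, nsmul_eq_mul]
  push_cast
  ring

lemma projPolar_add_smul_right (u v w : M) (t : R) :
    projPolar Q u v (w + t • v) = projPolar Q u v w + t * projPolar Q u v v := by
  simp only [projPolar, polar_add_right, polar_smul_right, smul_eq_mul]
  ring

lemma polar_add_smul_self_right (u v : M) (k : R) :
    polar Q u (v + k • u) = polar Q u v + k * (2 * Q u) := by
  simp [polar_add_right, polar_smul_right, polar_self]

lemma two_mul_map_mul_gramDet (v : Fin 3 → M) :
    2 * Q (v 0) * gramDet Q v =
      projPolar Q (v 0) (v 1) (v 1) * projPolar Q (v 0) (v 2) (v 2) -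
        projPolar Q (v 0) (v 1) (v 2) ^ 2 := by
  simp only [gramDet, Matrix.det_fin_three, Matrix.of_apply, polar_self, projPolar,
    polar_comm Q (v 1) (v 0), polar_comm Q (v 2) (v 0), polar_comm Q (v 2) (v 1), nsmul_eq_mul]
  push_cast
  ring

lemma map_smul_add_smul_add_smul (u v w : M) (x y z : R) :
    Q (x • u + y • v + z • w) = Q u * x ^ 2 + Q v * y ^ 2 + Q w * z ^ 2 +
      polar Q v w * (y * z) + polar Q u w * (x * z) + polar Q u v * (x * y) := by
  simp only [QuadraticMap.map_add Q, QuadraticMap.map_smul, polar_add_left, polar_smul_left,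
    polar_smul_right, smul_eq_mul]
  ring

end GramDet

variable {M : Type*} [AddCommGroup M]

lemma gramDet_basis_eq (Q : QuadraticForm ℤ M) {ι : Type*} [Fintype ι] [DecidableEq ι]
    (b c : Basis ι ℤ M) : gramDet Q b = gramDet Q c := by
  have gramDet_eq (b : Basis ι ℤ M) :
      gramDet Q b = (LinearMap.BilinForm.toMatrix b Q.polarBilin).det := by
    rw [gramDet]
    congr 1
    ext i j
    simp [LinearMap.BilinForm.toMatrix_apply]
  have sq_det : (b.toMatrix c).det ^ 2 = 1 := by
    rw [← Basis.det_apply]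
    exact Int.isUnit_sq (b.isUnit_det c)
  rw [gramDet_eq b, gramDet_eq c, ← LinearMap.BilinForm.toMatrix_mul_basis_toMatrix b c,
    Matrix.det_mul, Matrix.det_mul, Matrix.det_transpose]
  linear_combination -(LinearMap.BilinForm.toMatrix b Q.polarBilin).det * sq_det

/-- Hermite reducedness of a ternary form with respect to `v`: size reduction against the first
vector, which is not longer than the second, and Gauss reducedness of the binary form induced on the
orthogonal complement of the first vector. -/
structure IsHermiteReduced (Q : QuadraticForm ℤ M) (v : Fin 3 → M) : Prop where
  abs_polar_zero_one_le : |polar Q (v 0) (v 1)| ≤ Q (v 0)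
  abs_polar_zero_two_le : |polar Q (v 0) (v 2)| ≤ Q (v 0)
  two_mul_abs_projPolar_le :
    2 * |projPolar Q (v 0) (v 1) (v 2)| ≤ projPolar Q (v 0) (v 1) (v 1)
  map_zero_le_map_one : Q (v 0) ≤ Q (v 1)
  projPolar_one_le_projPolar_two :
    projPolar Q (v 0) (v 1) (v 1) ≤ projPolar Q (v 0) (v 2) (v 2)

variable {Q : QuadraticForm ℤ M}

lemma projPolar_self_pos (hQ : Q.PosDef) {ι : Type*} {v : ι → M} (hv : LinearIndependent ℤ v)
    {i j : ι} (hij : i ≠ j) : 0 < projPolar Q (v i) (v j) (v j) := by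
  have hi : 0 < Q (v i) := hQ _ (hv.ne_zero i)
  have ne_zero : -polar Q (v i) (v j) • v i + (2 * Q (v i)) • v j ≠ 0 := by
    have hpair : LinearIndependent ℤ ![v i, v j] := by
      convert hv.comp ![i, j] (by simpa [Function.Injective, eq_comm] using hij) using 1
      ext m
      fin_cases m <;> rfl
    exact fun h => (mul_pos two_pos hi).ne' (LinearIndependent.pair_iff.mp hpair _ _ h).2
  have map_eq : Q (-polar Q (v i) (v j) • v i + (2 * Q (v i)) • v j) =
      Q (v i) * projPolar Q (v i) (v j) (v j) := by
    simp only [QuadraticMap.map_add Q, QuadraticMap.map_smul, polar_smul_left, polar_smul_right,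
      projPolar_self, smul_eq_mul]
    ring
  exact pos_of_mul_pos_right (map_eq ▸ hQ _ ne_zero) hi.le

lemma exists_basis_forall_flagPotential_le (hQ : Q.PosDef) (b : Basis (Fin 3) ℤ M) :
    ∃ c : Basis (Fin 3) ℤ M, ∀ c' : Basis (Fin 3) ℤ M,
      flagPotential Q c ≤ flagPotential Q c' := by
  have : Nonempty (Basis (Fin 3) ℤ M) := ⟨b⟩
  have nonneg (c : Basis (Fin 3) ℤ M) : 0 ≤ flagPotential Q c :=
    mul_nonneg (hQ.nonneg _) (projPolar_self_pos hQ c.linearIndependent (by decide)).le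
  let potential (c : Basis (Fin 3) ℤ M) : ℕ := (flagPotential Q c).toNat
  exact ⟨Function.argmin potential, fun c' =>
    (Int.toNat_le.mp (Function.argmin_le potential c')).trans_eq (Int.toNat_of_nonneg (nonneg c'))⟩

lemma exists_basis_size_reduced (hQ : Q.PosDef) (b : Basis (Fin 3) ℤ M) :
    ∃ c : Basis (Fin 3) ℤ M, flagPotential Q c = flagPotential Q b ∧
      |polar Q (c 0) (c 1)| ≤ Q (c 0) ∧ |polar Q (c 0) (c 2)| ≤ Q (c 0) ∧
      2 * |projPolar Q (c 0) (c 1) (c 2)| ≤ projPolar Q (c 0) (c 1) (c 1) := by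
  have h₀ : 0 < 2 * Q (b 0) := mul_pos two_pos (hQ _ (b.ne_zero 0))
  obtain ⟨t, ht⟩ := exists_two_mul_abs_add_mul_le (projPolar Q (b 0) (b 1) (b 2))
    (projPolar_self_pos hQ b.linearIndependent (show (0 : Fin 3) ≠ 1 by decide))
  obtain ⟨k, hk⟩ := exists_two_mul_abs_add_mul_le (polar Q (b 0) (b 1)) h₀
  obtain ⟨l, hl⟩ := exists_two_mul_abs_add_mul_le (polar Q (b 0) (b 2 + t • b 1)) h₀
  obtain ⟨c, hc⟩ := exists_basis_eq_unitriangular b k l t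
  obtain ⟨hc₀, hc₁, hc₂⟩ : c 0 = b 0 ∧ c 1 = b 1 + k • b 0 ∧ c 2 = b 2 + t • b 1 + l • b 0 := by
    simp [hc]
  refine ⟨c, ?_, ?_, ?_, ?_⟩
  · rw [flagPotential, flagPotential, hc₀, hc₁, projPolar_add_smul_add_smul]
  · rw [hc₀, hc₁, polar_add_smul_self_right]
    linarith
  · rw [hc₀, hc₂, polar_add_smul_self_right]
    linarith
  · rw [hc₀, hc₁, hc₂, projPolar_add_smul_add_smul, projPolar_add_smul_add_smul,
      projPolar_add_smul_right]
    exact ht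

theorem exists_basis_isHermiteReduced (hQ : Q.PosDef) (b : Basis (Fin 3) ℤ M) :
    ∃ c : Basis (Fin 3) ℤ M, IsHermiteReduced Q c := by
  obtain ⟨m, hm⟩ := exists_basis_forall_flagPotential_le hQ b
  obtain ⟨c, hcm, hc₁, hc₂, hc₃⟩ := exists_basis_size_reduced hQ m
  have flagPotential_le_reindex (σ : Equiv.Perm (Fin 3)) :
      flagPotential Q c ≤ flagPotential Q (c.reindex σ) := hcm ▸ hm _
  refine ⟨c, hc₁, hc₂, hc₃, ?_, ?_⟩
  · have h := flagPotential_le_reindex (Equiv.swap 0 1)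
    simp only [flagPotential, Basis.reindex_apply, Equiv.symm_swap, Equiv.swap_apply_left,
      Equiv.swap_apply_right, projPolar_self_comm Q (c 1) (c 0)] at h
    exact le_of_mul_le_mul_right h (projPolar_self_pos hQ c.linearIndependent (by decide))
  · have h := flagPotential_le_reindex (Equiv.swap 1 2)
    have swap_zero : Equiv.swap (1 : Fin 3) 2 0 = 0 := by decide
    simp only [flagPotential, Basis.reindex_apply, Equiv.symm_swap, Equiv.swap_apply_left,
      swap_zero] at h
    exact le_of_mul_le_mul_left h (hQ _ (c.ne_zero 0))

namespace IsHermiteReduced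

variable {v : Fin 3 → M}

lemma three_mul_sq_map_le (hv : IsHermiteReduced Q v) :
    3 * Q (v 0) ^ 2 ≤ projPolar Q (v 0) (v 1) (v 1) := by
  have h₀ : 0 ≤ Q (v 0) := (abs_nonneg _).trans hv.abs_polar_zero_one_le
  have := sq_le_sq.mpr (hv.abs_polar_zero_one_le.trans (le_abs_self _))
  rw [projPolar_self]
  nlinarith [mul_le_mul_of_nonneg_left hv.map_zero_le_map_one h₀]

lemma three_mul_sq_projPolar_le (hv : IsHermiteReduced Q v) :
    3 * projPolar Q (v 0) (v 1) (v 1) ^ 2 ≤ 8 * Q (v 0) * gramDet Q v := by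
  have h₀ : 0 ≤ projPolar Q (v 0) (v 1) (v 1) :=
    (by positivity : (0 : ℤ) ≤ 3 * Q (v 0) ^ 2).trans hv.three_mul_sq_map_le
  have h₁ : (2 * projPolar Q (v 0) (v 1) (v 2)) ^ 2 ≤ projPolar Q (v 0) (v 1) (v 1) ^ 2 :=
    sq_le_sq.mpr (by simpa [abs_mul, abs_of_nonneg h₀] using hv.two_mul_abs_projPolar_le)
  nlinarith [two_mul_map_mul_gramDet Q v,
    mul_le_mul_of_nonneg_left hv.projPolar_one_le_projPolar_two h₀]

lemma map_cube_le (hv : IsHermiteReduced Q v) (h₀ : 0 < Q (v 0)) :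
    27 * Q (v 0) ^ 3 ≤ 8 * gramDet Q v := by
  refine le_of_mul_le_mul_left ?_ h₀
  calc Q (v 0) * (27 * Q (v 0) ^ 3) = 3 * (3 * Q (v 0) ^ 2) ^ 2 := by ring
    _ ≤ 3 * projPolar Q (v 0) (v 1) (v 1) ^ 2 := by gcongr; exact hv.three_mul_sq_map_le
    _ ≤ Q (v 0) * (8 * gramDet Q v) := by linarith [hv.three_mul_sq_projPolar_le]

lemma map_zero_eq_one (hv : IsHermiteReduced Q v) (h₀ : 0 < Q (v 0)) (hdet : gramDet Q v = 6) :
    Q (v 0) = 1 := by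
  have := hv.map_cube_le h₀
  by_contra h
  have h₂ : 2 ≤ Q (v 0) := by omega
  have := pow_le_pow_left₀ zero_le_two h₂ 3
  omega

lemma coefficients_of_gramDet_eq_six (hv : IsHermiteReduced Q v) (h₀ : 0 < Q (v 0))
    (hdet : gramDet Q v = 6) :
    Q (v 1) = 1 ∧ Q (v 2) = 1 ∧ polar Q (v 0) (v 2) = 0 ∧
      (polar Q (v 0) (v 1) = 0 ∧ polar Q (v 1) (v 2) ^ 2 = 1 ∨
        polar Q (v 0) (v 1) ^ 2 = 1 ∧ polar Q (v 1) (v 2) = 0) := by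
  have ha := hv.map_zero_eq_one h₀ hdet
  have hA : projPolar Q (v 0) (v 1) (v 1) ≤ 4 := by
    have := hv.three_mul_sq_projPolar_le
    rw [ha, hdet] at this
    nlinarith
  have hdisc := two_mul_map_mul_gramDet Q v
  obtain ⟨hf, he, hB, hab, hAC⟩ := hv
  rw [projPolar_self] at hA
  simp only [projPolar_self Q, hdet, ha] at hdisc hA hB hAC hab hf he
  rw [projPolar, ha] at hdisc hB
  generalize Q (v 1) = b, Q (v 2) = c, polar Q (v 1) (v 2) = d, polar Q (v 0) (v 2) = e,
    polar Q (v 0) (v 1) = f at *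
  rw [abs_le] at hf he
  have hB₂ : |2 * 1 * d - f * e| ≤ 2 := by omega
  rw [abs_le] at hB₂
  have hf₁ : f = -1 ∨ f = 0 ∨ f = 1 := by omega
  have he₁ : e = -1 ∨ e = 0 ∨ e = 1 := by omega
  rcases hf₁ with rfl | rfl | rfl <;> rcases he₁ with rfl | rfl | rfl <;>
  · obtain rfl : b = 1 := by omega
    obtain rfl | rfl | rfl : d = -1 ∨ d = 0 ∨ d = 1 := by omega
    all_goals omega

end IsHermiteReduced

lemma exists_sq_add_mul_add_sq_eq_sq_add_three_mul_sq (y z : ℤ) :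
    ∃ u v : ℤ, y ^ 2 + y * z + z ^ 2 = u ^ 2 + 3 * v ^ 2 := by
  rcases Int.even_or_odd' z with ⟨v, rfl | rfl⟩
  · exact ⟨y + v, v, by ring⟩
  rcases Int.even_or_odd' y with ⟨w, rfl | rfl⟩
  · exact ⟨2 * v + 1 + w, w, by ring⟩
  · exact ⟨w - v, w + v + 1, by ring⟩

theorem exists_eq_sq_add_sq_add_three_mul_sq_of_gramDet_eq_six (hQ : Q.PosDef)
    (b : Basis (Fin 3) ℤ M) (hdet : gramDet Q b = 6) (m : M) :
    ∃ x y z : ℤ, Q m = x ^ 2 + y ^ 2 + 3 * z ^ 2 := by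
  obtain ⟨c, hc⟩ := exists_basis_isHermiteReduced hQ b
  rw [gramDet_basis_eq Q b c] at hdet
  have h₀ : 0 < Q (c 0) := hQ _ (c.ne_zero 0)
  have ha := hc.map_zero_eq_one h₀ hdet
  obtain ⟨hb, hc, he, hfd⟩ := hc.coefficients_of_gramDet_eq_six h₀ hdet
  have hm : m = c.repr m 0 • c 0 + c.repr m 1 • c 1 + c.repr m 2 • c 2 := by
    rw [← Fin.sum_univ_three fun i => c.repr m i • c i, c.sum_repr]
  generalize c.repr m 0 = x, c.repr m 1 = y, c.repr m 2 = z at hm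
  rw [hm, map_smul_add_smul_add_smul, ha, hb, hc, he]
  obtain ⟨hf, hd⟩ | ⟨hf, hd⟩ := hfd
  · obtain ⟨u, v, huv⟩ :=
      exists_sq_add_mul_add_sq_eq_sq_add_three_mul_sq y (polar Q (c 1) (c 2) * z)
    exact ⟨x, u, v, by linear_combination huv - z ^ 2 * hd + x * y * hf⟩
  · obtain ⟨u, v, huv⟩ :=
      exists_sq_add_mul_add_sq_eq_sq_add_three_mul_sq x (polar Q (c 0) (c 1) * y)
    exact ⟨z, u, v, by linear_combination huv - y ^ 2 * hf + y * z * hd⟩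

end Reduction

section TernaryForm

variable {R : Type*} [CommRing R]

/-- The ternary form `a x² + b y² + c z² + d yz + e xz + f xy`. -/
def ternaryForm (a b c d e f : R) : QuadraticForm R (Fin 3 → R) :=
  a • proj 0 0 + b • proj 1 1 + c • proj 2 2 + d • proj 1 2 + e • proj 0 2 + f • proj 0 1

variable (a b c d e f : R)

lemma ternaryForm_apply (v : Fin 3 → R) :
    ternaryForm a b c d e f v = a * v 0 ^ 2 + b * v 1 ^ 2 + c * v 2 ^ 2 +
      d * (v 1 * v 2) + e * (v 0 * v 2) + f * (v 0 * v 1) := by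
  simp [ternaryForm, pow_two]

lemma polar_ternaryForm (v w : Fin 3 → R) :
    polar (ternaryForm a b c d e f) v w =
      2 * a * (v 0 * w 0) + 2 * b * (v 1 * w 1) + 2 * c * (v 2 * w 2) +
        d * (v 1 * w 2 + v 2 * w 1) + e * (v 0 * w 2 + v 2 * w 0) +
        f * (v 0 * w 1 + v 1 * w 0) := by
  simp only [polar, ternaryForm_apply, Pi.add_apply]
  ring

lemma gramDet_ternaryForm :
    gramDet (ternaryForm a b c d e f) (Pi.basisFun R (Fin 3)) =
      2 * (4 * a * b * c + d * e * f - a * d ^ 2 - b * e ^ 2 - c * f ^ 2) := by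
  have gram_eq : (Matrix.of fun i j => polar (ternaryForm a b c d e f)
      (Pi.basisFun R (Fin 3) i) (Pi.basisFun R (Fin 3) j)) =
      !![2 * a, f, e; f, 2 * b, d; e, d, 2 * c] := by
    ext i j
    fin_cases i <;> fin_cases j <;> simp [polar_ternaryForm]
  rw [gramDet, gram_eq, Matrix.det_fin_three]
  simp only [Matrix.of_apply, Matrix.cons_val]
  ring

lemma posDef_ternaryForm [LinearOrder R] [IsStrictOrderedRing R] {a b c e f : R}
    (hb : 0 < b) (hc : 0 < c) (hD : 0 < 4 * a * b * c - b * e ^ 2 - c * f ^ 2) :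
    (ternaryForm a b c 0 e f).PosDef := by
  intro v hv
  have sos : 4 * b * c * ternaryForm a b c 0 e f v = b * (2 * c * v 2 + e * v 0) ^ 2 +
      c * (2 * b * v 1 + f * v 0) ^ 2 + (4 * a * b * c - b * e ^ 2 - c * f ^ 2) * v 0 ^ 2 := by
    rw [ternaryForm_apply]
    ring
  refine pos_of_mul_pos_right (a := 4 * b * c) ?_ (by positivity)
  rw [sos]
  generalize 4 * a * b * c - b * e ^ 2 - c * f ^ 2 = D at hD
  by_cases h₀ : v 0 = 0
  · have hv₁₂ : v 1 ≠ 0 ∨ v 2 ≠ 0 := by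
      contrapose! hv
      ext i
      fin_cases i <;> simp [h₀, hv]
    simp only [h₀, mul_zero, add_zero]
    rcases hv₁₂ with h | h <;> positivity
  · positivity

end TernaryForm

section Dirichlet

lemma jacobiSym_neg_three_eq_one {E : ℕ} (hE : E % 6 = 1) : jacobiSym (-3) E = 1 := by
  rw [jacobiSym.mod_right _ (Nat.odd_iff.mpr (by omega))]
  obtain h | h : E % 12 = 1 ∨ E % 12 = 7 := by omega
  all_goals norm_num [h]

lemma exists_dvd_sq_add_of_dvd_sq_mul_add_three {p E : ℕ} (hp : p.Prime) (hp₄ : p % 4 = 1)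
    (hE : E % 6 = 1) {w : ℤ} (hw : (E : ℤ) ∣ w ^ 2 * p + 3) : ∃ g : ℤ, (p : ℤ) ∣ g ^ 2 + E := by
  have := Fact.mk hp
  have hE₂ : Odd E := Nat.odd_iff.mpr (by omega)
  have hwp : jacobiSym w E ^ 2 * jacobiSym p E = 1 := by
    rw [← jacobiSym.pow_left, ← jacobiSym.mul_left, ← jacobiSym_neg_three_eq_one hE]
    exact jacobiSym.mod_left' (Int.modEq_iff_dvd.mpr (by simpa using hw)).symm
  have hpE : jacobiSym p E = 1 := by
    rcases Int.isUnit_iff.mp (IsUnit.of_mul_eq_one _ ((mul_comm _ _).trans hwp)) with h | h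
    · exact h
    · nlinarith [sq_nonneg (jacobiSym w E)]
  have hneg : jacobiSym (-E) p = 1 := by
    rw [jacobiSym.neg _ (Nat.odd_iff.mpr (by omega)), ZMod.χ₄_nat_one_mod_four hp₄, one_mul,
      jacobiSym.quadratic_reciprocity_one_mod_four' hE₂ hp₄, hpE]
  obtain ⟨g, hg⟩ := ZMod.isSquare_of_jacobiSym_eq_one hneg
  refine ⟨g.valMinAbs, (ZMod.intCast_zmod_eq_zero_iff_dvd _ p).mp ?_⟩
  push_cast at hg ⊢
  rw [pow_two, ← hg, neg_add_cancel]

lemma exists_prime_eq_add_mul {a : ℤ} {q : ℕ} (hq : q ≠ 0) (ha : IsCoprime a q) :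
    ∃ p k : ℕ, p.Prime ∧ (p : ℤ) = a + q * k := by
  obtain ⟨p, hap, hp, hmod⟩ := Nat.forall_exists_prime_gt_and_zmodEq a.toNat hq ha
  obtain ⟨k, hk⟩ := hmod.symm.dvd
  have hk₀ : 0 ≤ k := by
    have : 0 < (q : ℤ) * k := by omega
    exact (pos_of_mul_pos_right this (Int.natCast_nonneg q)).le
  lift k to ℕ using hk₀
  exact ⟨p, k, hp, by linarith⟩

lemma exists_eq_sq_add_sq_add_three_mul_sq_of_prime {n p E : ℕ} (hp : p.Prime) (hE : E % 6 = 1)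
    {w : ℤ} (hw : w ^ 2 * p + 3 = 4 * n * E) :
    ∃ x y z : ℤ, (n : ℤ) = x ^ 2 + y ^ 2 + 3 * z ^ 2 := by
  have hp₀ : (0 : ℤ) < p := by exact_mod_cast hp.pos
  have hn₀ : (0 : ℤ) < n := by
    have : (0 : ℤ) < n * (4 * E) := by
      rw [show (n : ℤ) * (4 * E) = w ^ 2 * p + 3 by rw [hw]; ring]
      positivity
    exact pos_of_mul_pos_left this (by positivity)
  have hp₄ : p % 4 = 1 := by
    rcases Int.even_or_odd' w with ⟨t, rfl | rfl⟩ <;> ring_nf at hw <;> omega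
  obtain ⟨g, a, hg⟩ := exists_dvd_sq_add_of_dvd_sq_mul_add_three hp hp₄ hE ⟨4 * n, by rw [hw]; ring⟩
  have hD : 4 * a * p * n - p * w ^ 2 - n * (2 * g) ^ 2 = 3 := by
    linear_combination -4 * n * hg - hw
  have hdet : gramDet (ternaryForm a p n 0 w (2 * g)) (Pi.basisFun ℤ (Fin 3)) = 6 := by
    rw [gramDet_ternaryForm]
    linear_combination 2 * hD
  obtain ⟨x, y, z, h⟩ := exists_eq_sq_add_sq_add_three_mul_sq_of_gramDet_eq_six
    (posDef_ternaryForm hp₀ hn₀ (hD ▸ three_pos)) _ hdet (Pi.single 2 1)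
  exact ⟨x, y, z, by simpa [ternaryForm_apply] using h⟩

lemma exists_eq_sq_add_sq_add_three_mul_sq_of_not_three_dvd {n : ℕ} (hn : ¬ 3 ∣ n) :
    ∃ x y z : ℤ, (n : ℤ) = x ^ 2 + y ^ 2 + 3 * z ^ 2 := by
  obtain ⟨u, v, huv⟩ : IsCoprime (n : ℤ) 3 :=
    Int.isCoprime_iff_gcd_eq_one.mpr (Nat.prime_three.coprime_iff_not_dvd.mpr hn).symm
  have coprime_eight : IsCoprime (4 * n - 3 : ℤ) 8 :=
    ⟨4 * n - 3, -2 * n ^ 2 + 3 * n - 1, by ring⟩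
  have coprime_three : IsCoprime (4 * n - 3 : ℤ) 3 :=
    ⟨u, u + 4 * v - 1, by linear_combination 4 * huv⟩
  have coprime_self : IsCoprime (4 * n - 3 : ℤ) n :=
    ⟨-v, u + 4 * v, by linear_combination huv⟩
  obtain ⟨p, k, hp, hpk⟩ := exists_prime_eq_add_mul (a := 4 * n - 3) (q := 8 * 3 * n) (by omega)
    (by push_cast; exact (coprime_eight.mul_right coprime_three).mul_right coprime_self)
  refine exists_eq_sq_add_sq_add_three_mul_sq_of_prime (E := 1 + 6 * k) (w := 1) hp (by omega) ?_
  push_cast at hpk ⊢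
  linear_combination hpk

lemma exists_eq_sq_add_sq_add_three_mul_sq_of_mod_nine_eq_three {n : ℕ} (hn : n % 9 = 3) :
    ∃ x y z : ℤ, (n : ℤ) = x ^ 2 + y ^ 2 + 3 * z ^ 2 := by
  obtain ⟨j, rfl⟩ : ∃ j, n = 3 * (3 * j + 1) := ⟨n / 9, by omega⟩
  have coprime_eight : IsCoprime (4 * j + 1 : ℤ) 8 := ⟨1 - 4 * j, 2 * j ^ 2, by ring⟩
  have coprime_three_mul_add_one : IsCoprime (4 * j + 1 : ℤ) (3 * j + 1) := ⟨-3, 4, by ring⟩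
  obtain ⟨p, k, hp, hpk⟩ := exists_prime_eq_add_mul (a := 4 * j + 1) (q := 8 * (3 * j + 1))
    (by omega) (by push_cast; exact coprime_eight.mul_right coprime_three_mul_add_one)
  refine exists_eq_sq_add_sq_add_three_mul_sq_of_prime (E := 1 + 6 * k) (w := 3) hp (by omega) ?_
  push_cast at hpk ⊢
  linear_combination 9 * hpk

end Dirichlet

lemma dvd_and_dvd_of_dvd_sq_add_sq {q : ℕ} (hq : q.Prime) (hq₄ : q % 4 = 3) {x y : ℤ}
    (h : (q : ℤ) ∣ x ^ 2 + y ^ 2) : (q : ℤ) ∣ x ∧ (q : ℤ) ∣ y := by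
  have := Fact.mk hq
  simp only [← ZMod.intCast_zmod_eq_zero_iff_dvd _ q, Int.cast_add, Int.cast_pow] at h ⊢
  have hxy := eq_neg_of_add_eq_zero_left h
  exact ⟨by_contra fun hx => ZMod.mod_four_ne_three_of_sq_eq_neg_sq hx hxy hq₄,
    by_contra fun hy => ZMod.mod_four_ne_three_of_sq_eq_neg_sq' hy hxy hq₄⟩

lemma sq_add_sq_add_three_mul_sq_ne_nine_pow_mul (k : ℕ) (l x y z : ℤ) :
    x ^ 2 + y ^ 2 + 3 * z ^ 2 ≠ 9 ^ k * (9 * l + 6) := by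
  have three_dvd {x y : ℤ} (h : (3 : ℤ) ∣ x ^ 2 + y ^ 2) : 3 ∣ x ∧ 3 ∣ y :=
    dvd_and_dvd_of_dvd_sq_add_sq Nat.prime_three rfl h
  intro h
  induction k generalizing x y z with
  | zero =>
    obtain ⟨⟨a, rfl⟩, ⟨b, rfl⟩⟩ := three_dvd (x := x) (y := y) (by omega)
    have : (3 : ℤ) ∣ z ^ 2 + 1 ^ 2 := by ring_nf at h ⊢; omega
    exact absurd (three_dvd this).2 (by decide)
  | succ k ih =>
    rw [pow_succ' 9 k, mul_assoc] at h
    obtain ⟨⟨a, rfl⟩, ⟨b, rfl⟩⟩ := three_dvd (x := x) (y := y) (by omega)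
    obtain ⟨c, rfl⟩ : (3 : ℤ) ∣ z := Int.prime_three.dvd_of_dvd_pow (n := 2) (by
      simp only [mul_pow] at h; omega)
    exact ih a b c (by linarith)

theorem exists_eq_sq_add_sq_add_three_mul_sq_iff (n : ℕ) :
    (∃ x y z : ℤ, (n : ℤ) = x ^ 2 + y ^ 2 + 3 * z ^ 2) ↔
      ¬ ∃ k l : ℕ, n = 9 ^ k * (9 * l + 6) := by
  constructor
  · rintro ⟨x, y, z, h⟩ ⟨k, l, rfl⟩
    exact sq_add_sq_add_three_mul_sq_ne_nine_pow_mul k l x y z (by exact_mod_cast h.symm)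
  induction n using Nat.strong_induction_on with
  | h n ih =>
    intro hn
    obtain rfl | hn₀ := n.eq_zero_or_pos
    · exact ⟨0, 0, 0, by norm_num⟩
    have hn₆ : n % 9 ≠ 6 := fun h => hn ⟨0, n / 9, by omega⟩
    obtain h | h | ⟨m, rfl⟩ : ¬ 3 ∣ n ∨ n % 9 = 3 ∨ 9 ∣ n := by omega
    · exact exists_eq_sq_add_sq_add_three_mul_sq_of_not_three_dvd h
    · exact exists_eq_sq_add_sq_add_three_mul_sq_of_mod_nine_eq_three h
    · obtain ⟨x, y, z, hm⟩ := ih m (by omega) fun ⟨k, l, hkl⟩ =>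
        hn ⟨k + 1, l, by rw [hkl, pow_succ', mul_assoc]⟩
      exact ⟨3 * x, 3 * y, 3 * z, by push_cast; linear_combination 9 * hm⟩

theorem exists_eq_sq_add_four_mul_iff (n : ℤ) :
    (∃ x y z : ℤ, n = x ^ 2 + 4 * (y ^ 2 + y * z + z ^ 2)) ↔
      (∃ x y z : ℤ, n = x ^ 2 + y ^ 2 + 3 * z ^ 2) ∧ n % 4 < 2 := by
  constructor
  · rintro ⟨x, y, z, rfl⟩
    refine ⟨⟨x, 2 * y + z, z, by ring⟩, ?_⟩
    rw [Int.add_mul_emod_self_left]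
    rcases Int.even_or_odd' x with ⟨t, rfl | rfl⟩ <;> ring_nf <;> omega
  · rintro ⟨⟨x, u, v, rfl⟩, h⟩
    rcases Int.even_or_odd' (u - v) with ⟨y, hy | hy⟩
    · obtain rfl : u = 2 * y + v := by omega
      exact ⟨x, y, v, by ring⟩
    rcases Int.even_or_odd' (x - v) with ⟨t, ht | ht⟩
    · obtain rfl : x = 2 * t + v := by omega
      exact ⟨u, t, v, by ring⟩
    · obtain rfl : u = 2 * y + 1 + v := by omega
      obtain rfl : x = 2 * t + 1 + v := by omega
      rcases Int.even_or_odd' v with ⟨w, rfl | rfl⟩ <;> ring_nf at h <;> omega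

theorem stmt_15 (n : ℕ) :
    (∃ x y z : ℤ, (n : ℤ) = x ^ 2 + 4 * (y ^ 2 + y * z + z ^ 2)) ↔
    ((¬ ∃ l : ℕ, n = 4 * l + 2) ∧ (¬ ∃ l : ℕ, n = 4 * l + 3) ∧
      ¬ ∃ k l : ℕ, n = 9 ^ k * (9 * l + 6)) := by
  have mod_four_lt_two_iff :
      (n : ℤ) % 4 < 2 ↔ (¬ ∃ l : ℕ, n = 4 * l + 2) ∧ ¬ ∃ l : ℕ, n = 4 * l + 3 := by
    constructor
    · exact fun h => ⟨by rintro ⟨l, rfl⟩; omega, by rintro ⟨l, rfl⟩; omega⟩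
    · rintro ⟨h₂, h₃⟩
      by_contra h
      obtain h | h : n % 4 = 2 ∨ n % 4 = 3 := by omega
      · exact h₂ ⟨n / 4, by omega⟩
      · exact h₃ ⟨n / 4, by omega⟩
  rw [exists_eq_sq_add_four_mul_iff, exists_eq_sq_add_sq_add_three_mul_sq_iff,
    mod_four_lt_two_iff, and_comm, and_assoc]
end

section
/- Let a, b be positive integers with a ≤ b. The quadratic form f^{a,b}_4(x,y,z,w) = a·x² + b·y² + 4·(z² + z·w + w²) represents every nonnegative integer (with x, y, z, w ∈ ℤ) if and only if a = 1 and b = 2. -/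
/-!
Representing `1`, `2` and `3` already forces `a = 1` and `b = 2`: at a point with `(x, y) ≠ 0` the
form is at least `a`, at a point with `y ≠ 0` it is at least `b`, and modulo `4` it is
`a x² + b y²`.

Conversely, `z = s - t`, `w = 2t` turns `z² + zw + w²` into `s² + 3t²`, and
`x² + 2y² + 4s² + 12t²` represents every `n` because the numbers congruent to `1` or `2` modulo `4`
are sums of three squares. Since two of three integers have the same parity and
`(r + s)² + (r - s)² = 2r² + 2s²`, a sum of three squares also has the shape `t² + 2r² + 2s²`;
applied to `n` when `n ≡ 1 [4]` and to `2n` when `n` is odd, this gives the ternary forms needed.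

The three squares follow Dirichlet. If `dn - 1` divides `h² + d`, some positive definite integral
ternary form of determinant `1` takes the value `n`. By Hermite's inequality such a form takes the
value `1` on a basis vector, as `(4/3) ^ ((k - 1) / 2) < 2` in dimension `k ≤ 5`. Splitting that
vector off leaves a form of smaller dimension, so by induction the form is a sum of squares.
Dirichlet's theorem on primes provides `d` such that `dn - 1` is a prime or twice a prime, and
quadratic reciprocity provides `h`.
-/

open Matrix

section Congruence

variable {m n R : Type*} [Fintype m] [Fintype n] [DecidableEq m] [DecidableEq n] [CommRing R]

/-- Congruence of square matrices: `M` and `N` are Gram matrices of one bilinear form in two bases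
of the same free module. -/
def IsCongruent (M N : Matrix m m R) : Prop :=
  ∃ P : Matrix m m R, IsUnit P ∧ Pᵀ * M * P = N

namespace IsCongruent

lemma refl (M : Matrix m m R) : IsCongruent M M :=
  ⟨1, isUnit_one, by simp⟩

lemma trans {M N K : Matrix m m R} (hMN : IsCongruent M N) (hNK : IsCongruent N K) :
    IsCongruent M K := by
  obtain ⟨P, hP, rfl⟩ := hMN
  obtain ⟨Q, hQ, rfl⟩ := hNK
  exact ⟨P * Q, hP.mul hQ, by simp only [transpose_mul, Matrix.mul_assoc]⟩

lemma submatrix {M N : Matrix m m R} (h : IsCongruent M N) (e : n ≃ m) :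
    IsCongruent (M.submatrix e e) (N.submatrix e e) := by
  obtain ⟨P, hP, rfl⟩ := h
  exact ⟨P.submatrix e e, (isUnit_submatrix_equiv e e).mpr hP, by
    simp only [transpose_submatrix, submatrix_mul_equiv]⟩

lemma symm {M N : Matrix m m R} (h : IsCongruent M N) : IsCongruent N M := by
  obtain ⟨_, ⟨P, rfl⟩, rfl⟩ := h
  refine ⟨_, P⁻¹.isUnit, ?_⟩
  have hP : (↑P⁻¹ : Matrix m m R)ᵀ * (P : Matrix m m R)ᵀ = 1 := by simp [← transpose_mul]
  rw [Matrix.mul_assoc, Matrix.mul_assoc, P.mul_inv, Matrix.mul_one, ← Matrix.mul_assoc, hP,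
    Matrix.one_mul]

lemma exists_eq_transpose_mul_self {M N : Matrix m m R} (h : IsCongruent M N)
    (hN : ∃ Q, N = Qᵀ * Q) : ∃ P, M = Pᵀ * P := by
  obtain ⟨P, -, rfl⟩ := h.symm
  obtain ⟨Q, rfl⟩ := hN
  exact ⟨Q * P, by simp only [transpose_mul, Matrix.mul_assoc]⟩

lemma det_eq {M N : Matrix m m ℤ} (h : IsCongruent M N) : N.det = M.det := by
  obtain ⟨P, hP, rfl⟩ := h
  have hdet : P.det * P.det = 1 := Int.isUnit_mul_self ((isUnit_iff_isUnit_det P).mp hP)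
  rw [det_mul, det_mul, det_transpose]
  linear_combination M.det * hdet

lemma posDef [PartialOrder R] [StarRing R] [TrivialStar R] {M N : Matrix m m R}
    (h : IsCongruent M N) (hM : M.PosDef) : N.PosDef := by
  obtain ⟨P, hP, rfl⟩ := h
  rwa [← conjTranspose_eq_transpose_of_trivial, ← star_eq_conjTranspose,
    IsUnit.posDef_star_left_conjugate_iff hP]

end IsCongruent

end Congruence

section SchurComplement

variable {ι n R : Type*} [Unique ι] [CommRing R]

lemma toBlocks₁₁_eq_smul_one [DecidableEq ι] (M : Matrix (ι ⊕ n) (ι ⊕ n) R) :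
    M.toBlocks₁₁ = M (.inl default) (.inl default) • (1 : Matrix ι ι R) := by
  ext i j
  simp [Subsingleton.elim i default, Subsingleton.elim j default, toBlocks₁₁]

variable [Fintype ι]

/-- The Schur complement of the `1 × 1` block in the top left corner, multiplied by the entry of
that block so that no division is needed. -/
def schurComplement (M : Matrix (ι ⊕ n) (ι ⊕ n) R) : Matrix n n R :=
  M (.inl default) (.inl default) • M.toBlocks₂₂ - M.toBlocks₂₁ * M.toBlocks₁₂

lemma schurComplement_apply (M : Matrix (ι ⊕ n) (ι ⊕ n) R) (j k : n) :
    schurComplement M j k = M (.inl default) (.inl default) * M (.inr j) (.inr k) -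
      M (.inr j) (.inl default) * M (.inl default) (.inr k) := by
  simp [schurComplement, mul_apply, toBlocks₁₂, toBlocks₂₁, toBlocks₂₂]

lemma posDef_schurComplement [Finite n] [LinearOrder R] [IsStrictOrderedRing R] [StarRing R]
    [TrivialStar R] {M : Matrix (ι ⊕ n) (ι ⊕ n) R} (hM : M.PosDef) :
    (schurComplement M).PosDef := by
  classical
  have := Fintype.ofFinite n
  set a := M (.inl default) (.inl default) with ha
  have ha_pos : 0 < a := hM.diag_pos
  have hM₁₁ := toBlocks₁₁_eq_smul_one M
  -- The columns of `B` are orthogonal to the first basis vector.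
  set B : Matrix (ι ⊕ n) n R := fromRows (-M.toBlocks₁₂) (a • 1) with hB
  have hMB : M * B = fromRows 0 (schurComplement M) := by
    nth_rw 1 [← fromBlocks_toBlocks M]
    rw [hB, fromBlocks_mul_fromRows, hM₁₁]
    simp [schurComplement, ← ha, neg_add_eq_sub]
  have hBMB : Bᴴ * M * B = a • schurComplement M := by
    rw [Matrix.mul_assoc, hMB, hB, conjTranspose_fromRows_eq_fromCols_conjTranspose,
      fromCols_mul_fromRows]
    simp
  have hB_inj : Function.Injective B.mulVec := by
    intro x y hxy
    have := congrArg (fun v => v ∘ Sum.inr) hxy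
    simpa [hB, fromRows_mulVec, smul_mulVec, ha_pos.ne', funext_iff] using this
  have hpos : (a • schurComplement M).PosDef := hBMB ▸ hM.conjTranspose_mul_mul_same hB_inj
  rw [posDef_iff_dotProduct_mulVec] at hpos ⊢
  refine ⟨?_, fun x hx ↦ ?_⟩
  · ext i j
    simpa [ha_pos.ne'] using congrFun₂ hpos.1 i j
  · simpa [smul_mulVec, ha_pos] using hpos.2 hx

variable [DecidableEq ι] [Fintype n] [DecidableEq n]

lemma mul_det_schurComplement (M : Matrix (ι ⊕ n) (ι ⊕ n) R) :
    M (.inl default) (.inl default) * (schurComplement M).det =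
      M (.inl default) (.inl default) ^ Fintype.card n * M.det := by
  set a := M (.inl default) (.inl default) with ha
  have hM₁₁ := toBlocks₁₁_eq_smul_one M
  have hmul : fromBlocks (1 : Matrix ι ι R) 0 (-M.toBlocks₂₁) (a • 1) * M =
      fromBlocks M.toBlocks₁₁ M.toBlocks₁₂ 0 (schurComplement M) := by
    nth_rw 2 [← fromBlocks_toBlocks M]
    rw [fromBlocks_multiply, hM₁₁]
    simp [schurComplement, ← ha, neg_add_eq_sub]
  have hdet := congrArg det hmul
  rw [det_mul, det_fromBlocks_zero₁₂, det_fromBlocks_zero₂₁, hM₁₁] at hdet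
  simpa using hdet.symm

lemma IsCongruent.exists_schurComplement_eq {M : Matrix (ι ⊕ n) (ι ⊕ n) R} {N : Matrix n n R}
    (h : IsCongruent (schurComplement M) N) :
    ∃ M', IsCongruent M M' ∧ schurComplement M' = N ∧
      M' (.inl default) (.inl default) = M (.inl default) (.inl default) := by
  obtain ⟨Q, hQ, rfl⟩ := h
  refine ⟨_, ⟨fromBlocks 1 0 0 Q, isUnit_fromBlocks_zero₂₁.mpr ⟨isUnit_one, hQ⟩, rfl⟩, ?_⟩
  have hmul : (fromBlocks 1 0 0 Q)ᵀ * M * fromBlocks 1 0 0 Q = fromBlocks M.toBlocks₁₁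
      (M.toBlocks₁₂ * Q) (Qᵀ * M.toBlocks₂₁) (Qᵀ * M.toBlocks₂₂ * Q) := by
    nth_rw 1 [← fromBlocks_toBlocks M]
    simp [fromBlocks_transpose, fromBlocks_multiply]
  rw [hmul]
  simp [schurComplement, Matrix.mul_sub, Matrix.sub_mul, Matrix.mul_assoc, toBlocks₁₁]

end SchurComplement

section Hermite

variable {m : Type*} [Fintype m] [DecidableEq m]

/-- `M i i` is the least value that a basis vector takes in any basis, for the integral form with
Gram matrix `M`. -/
def IsMinimalAt (M : Matrix m m ℤ) (i : m) : Prop :=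
  ∀ N, IsCongruent M N → M i i ≤ N i i

lemma IsMinimalAt.submatrix {n : Type*} [Fintype n] [DecidableEq n] {M : Matrix m m ℤ} {i : n}
    (e : n ≃ m) (hmin : IsMinimalAt M (e i)) : IsMinimalAt (M.submatrix e e) i :=
  fun N hN ↦ by simpa using hmin (N.submatrix e.symm e.symm) (by simpa using hN.submatrix e.symm)

lemma exists_isCongruent_isMinimalAt {M : Matrix m m ℤ} (hM : M.PosDef) (i : m) :
    ∃ N, IsCongruent M N ∧ IsMinimalAt N i := by
  obtain ⟨N, hMN, hN⟩ := exists_minimalFor_of_wellFoundedLT (IsCongruent M)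
    (fun N ↦ (N i i).toNat) ⟨M, .refl M⟩
  refine ⟨N, hMN, fun K hNK ↦ ?_⟩
  have hK : 0 < K i i := (hNK.posDef (hMN.posDef hM)).diag_pos
  by_contra! hlt
  have hlt' := (Int.toNat_lt_toNat (hK.trans hlt)).mpr hlt
  exact (hN (hMN.trans hNK) hlt'.le).not_gt hlt'

lemma exists_abs_add_mul_le (a b : ℤ) (ha : 0 < a) : ∃ k, 2 * |b + k * a| ≤ a := by
  refine ⟨-((2 * b + a) / (2 * a)), ?_⟩
  have h1 := Int.emod_add_mul_ediv (2 * b + a) (2 * a)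
  have h2 := Int.emod_nonneg (2 * b + a) (b := 2 * a) (by lia)
  have h3 := Int.emod_lt_of_pos (2 * b + a) (b := 2 * a) (by lia)
  rw [← abs_two, ← abs_mul, abs_le, abs_two]
  constructor <;> nlinarith

/-- Replacing the `i`-th basis vector by `eⱼ + k eᵢ`. -/
lemma IsMinimalAt.le_shear {M : Matrix m m ℤ} {i j : m} (hmin : IsMinimalAt M i)
    (hM : M.IsSymm) (hij : i ≠ j) (k : ℤ) :
    M i i ≤ M j j + 2 * k * M i j + k ^ 2 * M i i := by
  have hT : IsUnit (transvection i j k) := by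
    simp [isUnit_iff_isUnit_det, det_transvection_of_ne i j hij]
  have hS : IsUnit (swap ℤ i j) := .of_mul_eq_one _ (swap_mul_self i j)
  refine (hmin _ ⟨transvection i j k * swap ℤ i j, hT.mul hS, rfl⟩).trans_eq ?_
  have hTt : (transvection i j k)ᵀ = transvection j i k := by simp [transvection]
  rw [transpose_mul, transpose_swap, hTt, Matrix.mul_assoc, Matrix.mul_assoc, swap_mul_apply_left,
    transvection_mul_apply_same, ← Matrix.mul_assoc, mul_swap_apply_left, mul_swap_apply_left,
    mul_transvection_apply_same, mul_transvection_apply_same, hM.apply i j]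
  ring

lemma IsMinimalAt.three_mul_sq_le {M : Matrix m m ℤ} {i j : m} (hmin : IsMinimalAt M i)
    (hM : M.PosDef) (hij : i ≠ j) :
    3 * M i i ^ 2 ≤ 4 * (M i i * M j j - M i j ^ 2) := by
  obtain ⟨k, hk⟩ := exists_abs_add_mul_le (M i i) (M i j) hM.diag_pos
  have hsq : 4 * (M i j + k * M i i) ^ 2 ≤ M i i ^ 2 := by
    rw [← sq_abs (M i j + _)]
    nlinarith [abs_nonneg (M i j + k * M i i)]
  have hmin := hmin.le_shear (by simpa using hM.isHermitian) hij k
  nlinarith [hM.diag_pos (i := i)]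

lemma IsMinimalAt.pow_card_le {ι n : Type*} [Fintype ι] [Unique ι] [DecidableEq ι] [Fintype n]
    [DecidableEq n] {M : Matrix (ι ⊕ n) (ι ⊕ n) ℤ} (hM : M.PosDef)
    (hmin : IsMinimalAt M (.inl default))
    (ih : ∀ j, ∃ N, IsCongruent (schurComplement M) N ∧
      3 ^ (Fintype.card n).choose 2 * N j j ^ Fintype.card n ≤
        4 ^ (Fintype.card n).choose 2 * (schurComplement M).det) :
    3 ^ (Fintype.card n + 1).choose 2 * M (.inl default) (.inl default) ^ (Fintype.card n + 1) ≤
      4 ^ (Fintype.card n + 1).choose 2 * M.det := by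
  set a := M (.inl default) (.inl default) with ha
  have ha_pos : 0 < a := hM.diag_pos
  have hdet := mul_det_schurComplement M
  rcases isEmpty_or_nonempty n with _ | ⟨⟨j⟩⟩
  · simpa [← ha] using hdet.le
  obtain ⟨N, hN, hNj⟩ := ih j
  obtain ⟨M', hMM', rfl, ha'⟩ := hN.exists_schurComplement_eq
  have hM' := hMM'.posDef hM
  have hmin' : IsMinimalAt M' (.inl default) := fun K hK ↦ ha'.trans_le (hmin K (hMM'.trans hK))
  have hsq : 3 * a ^ 2 ≤ 4 * schurComplement M' j j := by
    have := hmin'.three_mul_sq_le hM' (j := .inr j) (by simp)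
    have hs : M' (.inr j) (.inl default) = M' (.inl default) (.inr j) := by
      simpa using hM'.isHermitian.apply (.inl default) (.inr j)
    rw [schurComplement_apply, hs, ← sq, ha, ← ha']
    exact this
  set d := Fintype.card n
  set c := d.choose 2
  have hchoose : (d + 1).choose 2 = d + c := by simp [Nat.choose_succ_succ', c]
  refine le_of_mul_le_mul_left ?_ (pow_pos ha_pos d)
  calc a ^ d * (3 ^ (d + 1).choose 2 * a ^ (d + 1))
      = 3 ^ c * a * (3 * a ^ 2) ^ d := by rw [hchoose]; ring
    _ ≤ 3 ^ c * a * (4 * schurComplement M' j j) ^ d := by gcongr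
    _ = 4 ^ d * a * (3 ^ c * schurComplement M' j j ^ d) := by ring
    _ ≤ 4 ^ d * a * (4 ^ c * (schurComplement M).det) := by gcongr
    _ = 4 ^ (d + c) * (a * (schurComplement M).det) := by ring
    _ = a ^ d * (4 ^ (d + 1).choose 2 * M.det) := by rw [hdet, hchoose]; ring

/-- **Hermite's inequality** `min M ≤ (4 / 3) ^ ((k - 1) / 2) * det M ^ (1 / k)` in dimension `k`,
raised to the `k`-th power. -/
theorem exists_isCongruent_pow_card_le {M : Matrix m m ℤ} (hM : M.PosDef) (i : m) :
    ∃ N, IsCongruent M N ∧ 3 ^ (Fintype.card m).choose 2 * N i i ^ Fintype.card m ≤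
      4 ^ (Fintype.card m).choose 2 * M.det := by
  induction hd : Fintype.card m generalizing m with
  | zero => exact (Fintype.card_eq_zero_iff.mp hd).elim i
  | succ d ih =>
    obtain ⟨N, hMN, hN⟩ := exists_isCongruent_isMinimalAt hM i
    let e := Equiv.sumCompl (· = i)
    have hcard : Fintype.card {j // ¬j = i} = d := by simp [hd]
    have hpos := (hMN.posDef hM).submatrix (e := e) e.injective
    have hmin : IsMinimalAt (N.submatrix e e) (.inl default) := .submatrix e hN
    have hbound := hmin.pow_card_le hpos fun j ↦ by
      simpa only [hcard] using ih (posDef_schurComplement hpos) j hcard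
    rw [hcard, det_submatrix_equiv_self, hMN.det_eq] at hbound
    exact ⟨N, hMN, hbound⟩

end Hermite

section Unimodular

lemma lt_two_of_pow_le {a : ℤ} {n : ℕ} (hn0 : n ≠ 0) (hn : n ≤ 5)
    (h : 3 ^ n.choose 2 * a ^ n ≤ 4 ^ n.choose 2) : a < 2 := by
  by_contra! ha
  have hle : 3 ^ n.choose 2 * 2 ^ n ≤ (4 : ℤ) ^ n.choose 2 := le_trans (by gcongr) h
  have hn1 : 1 ≤ n := Nat.one_le_iff_ne_zero.mpr hn0
  interval_cases n <;> exact absurd hle (by decide)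

lemma exists_eq_transpose_mul_self_of_schurComplement {ι n R : Type*} [Fintype ι] [Unique ι]
    [Fintype n] [CommRing R] {M : Matrix (ι ⊕ n) (ι ⊕ n) R} (hM : M.IsSymm)
    (h1 : M (.inl default) (.inl default) = 1) (h : ∃ Q, schurComplement M = Qᵀ * Q) :
    ∃ P, M = Pᵀ * P := by
  classical
  obtain ⟨Q, hQ⟩ := h
  refine ⟨fromBlocks 1 M.toBlocks₁₂ 0 Q, ?_⟩
  have h₁₁ : M.toBlocks₁₁ = 1 := by rw [toBlocks₁₁_eq_smul_one, h1, one_smul]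
  have h₂₁ : M.toBlocks₂₁ = M.toBlocks₁₂ᵀ := by
    ext j i; exact hM.apply _ _
  have h₂₂ : M.toBlocks₂₂ = M.toBlocks₁₂ᵀ * M.toBlocks₁₂ + Qᵀ * Q := by
    rw [← hQ, schurComplement, h1, h₂₁, one_smul, add_sub_cancel]
  nth_rw 1 [← fromBlocks_toBlocks M]
  simp [fromBlocks_transpose, fromBlocks_multiply, h₁₁, h₂₁, h₂₂]

lemma exists_isCongruent_apply_eq_one {m : Type*} [Fintype m] [DecidableEq m] {M : Matrix m m ℤ}
    (hM : M.PosDef) (hdet : M.det = 1) (hm : Fintype.card m ≤ 5) (i : m) :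
    ∃ N, IsCongruent M N ∧ N i i = 1 := by
  obtain ⟨N, hMN, hN⟩ := exists_isCongruent_pow_card_le hM i
  have hcard : Fintype.card m ≠ 0 := (Fintype.card_pos_iff.mpr ⟨i⟩).ne'
  have hlt : N i i < 2 := lt_two_of_pow_le hcard hm (by simpa only [hdet, mul_one] using hN)
  have hpos : 0 < N i i := (hMN.posDef hM).diag_pos
  exact ⟨N, hMN, by lia⟩

theorem exists_eq_transpose_mul_self {m : Type*} [Fintype m] [DecidableEq m] {M : Matrix m m ℤ}
    (hM : M.PosDef) (hdet : M.det = 1) (hm : Fintype.card m ≤ 5) : ∃ P, M = Pᵀ * P := by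
  induction hd : Fintype.card m generalizing m with
  | zero =>
    have := Fintype.card_eq_zero_iff.mp hd
    exact ⟨0, Subsingleton.elim _ _⟩
  | succ d ih =>
    obtain ⟨i⟩ : Nonempty m := Fintype.card_pos_iff.mp (by lia)
    obtain ⟨N, hMN, hNi⟩ := exists_isCongruent_apply_eq_one hM hdet hm i
    let e := Equiv.sumCompl (· = i)
    have hpos := (hMN.posDef hM).submatrix (e := e) e.injective
    have hone : N.submatrix e e (.inl default) (.inl default) = 1 := hNi
    have hdetS : (schurComplement (N.submatrix e e)).det = 1 := by
      have hmul := mul_det_schurComplement (N.submatrix e e)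
      rwa [hone, det_submatrix_equiv_self, hMN.det_eq, hdet, one_pow, one_mul, one_mul] at hmul
    have hcard : Fintype.card {j // ¬j = i} = d := by simp [hd]
    have hN : ∃ Q, N.submatrix e e = Qᵀ * Q :=
      exists_eq_transpose_mul_self_of_schurComplement (by simpa using hpos.isHermitian) hone
        (ih (posDef_schurComplement hpos) hdetS (by lia) hcard)
    obtain ⟨Q, hQ⟩ := hN
    refine hMN.exists_eq_transpose_mul_self ⟨Q.submatrix e.symm e.symm, ?_⟩
    rw [transpose_submatrix, submatrix_mul_equiv, ← hQ, submatrix_submatrix, e.self_comp_symm,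
      submatrix_id_id]

end Unimodular

section SumThreeSquares

lemma posDef_of_sq_add_eq_mul {n d h a : ℤ} (hd : 0 < d) (ha : 0 < a)
    (h_eq : h ^ 2 + d = (d * n - 1) * a) : !![a, h, 1; h, d * n - 1, 0; 1, 0, n].PosDef := by
  refine .of_dotProduct_mulVec_pos ?_ fun x hx ↦ ?_
  · ext i j
    fin_cases i <;> fin_cases j <;> rfl
  have hsq : d * a * (star x ⬝ᵥ !![a, h, 1; h, d * n - 1, 0; 1, 0, n] *ᵥ x) =
      d * (a * x 0 + h * x 1 + x 2) ^ 2 + (d * x 1 - h * x 2) ^ 2 + a * x 2 ^ 2 := by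
    simp only [dotProduct, mulVec, Fin.sum_univ_three, star_trivial, of_apply, cons_val]
    linear_combination (-d * x 1 ^ 2 - x 2 ^ 2) * h_eq
  suffices 0 < d * a * (star x ⬝ᵥ !![a, h, 1; h, d * n - 1, 0; 1, 0, n] *ᵥ x) from
    pos_of_mul_pos_right this (by positivity)
  rw [hsq]
  by_cases h2 : x 2 = 0
  · by_cases h1 : x 1 = 0
    · have h0 : x 0 ≠ 0 := fun h0 ↦ hx (by ext i; fin_cases i <;> assumption)
      have : 0 < d * (a * x 0) ^ 2 := by positivity
      simpa [h1, h2]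
    · have : 0 < (d * x 1) ^ 2 := by positivity
      have := hd.le
      simp only [h2, mul_zero, sub_zero]
      positivity
  · positivity

theorem exists_sum_three_sq_of_dvd {n d h : ℤ} (hd : 0 < d) (hdn : 1 < d * n)
    (hdvd : d * n - 1 ∣ h ^ 2 + d) : ∃ u v w : ℤ, n = u ^ 2 + v ^ 2 + w ^ 2 := by
  obtain ⟨a, ha⟩ := hdvd
  have ha_pos : 0 < a := by
    have : 0 < (d * n - 1) * a := ha ▸ by positivity
    exact pos_of_mul_pos_right this (by lia)
  have hdet : !![a, h, 1; h, d * n - 1, 0; 1, 0, n].det = 1 := by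
    rw [det_fin_three]
    simp only [of_apply, cons_val]
    linear_combination -n * ha
  obtain ⟨P, hP⟩ :=
    exists_eq_transpose_mul_self (posDef_of_sq_add_eq_mul hd ha_pos ha) hdet (by simp)
  refine ⟨P 0 2, P 1 2, P 2 2, ?_⟩
  simpa [mul_apply, Fin.sum_univ_three, ← sq] using congrFun₂ hP 2 2

lemma exists_two_mul_dvd_sq_add {p : ℕ} (hp : p.Prime) (hp_odd : Odd p) {d : ℤ} (hd : Odd d)
    (hJ : jacobiSym (-d) p = 1) : ∃ h : ℤ, 2 * (p : ℤ) ∣ h ^ 2 + d := by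
  have := Fact.mk hp
  have hp_odd' : Odd (p : ℤ) := mod_cast hp_odd
  obtain ⟨r, hr⟩ := ZMod.isSquare_of_jacobiSym_eq_one hJ
  obtain ⟨t, rfl⟩ := ZMod.intCast_surjective r
  have ht : (p : ℤ) ∣ t ^ 2 + d := by
    rw [← ZMod.intCast_zmod_eq_zero_iff_dvd]
    push_cast at hr ⊢
    linear_combination -hr
  -- `t + p` has the other parity than `t`, and `h ^ 2 + d` is even for odd `h`.
  obtain ⟨h, hh, hh_odd⟩ : ∃ h : ℤ, (p : ℤ) ∣ h ^ 2 + d ∧ Odd h := by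
    rcases Int.even_or_odd t with ht_even | ht_odd
    · refine ⟨t + p, ?_, ht_even.add_odd hp_odd'⟩
      rw [show (t + p) ^ 2 + d = t ^ 2 + d + p * (2 * t + p) by ring]
      exact ht.add (dvd_mul_right _ _)
    · exact ⟨t, ht, ht_odd⟩
  have hcop : IsCoprime (2 : ℤ) p := Int.isCoprime_two_left.mpr hp_odd'
  exact ⟨h, hcop.mul_dvd (hh_odd.pow.add_odd hd).two_dvd hh⟩

lemma jacobiSym_neg_eq_of_mod_four {p d : ℕ} (hp : Odd p) (hd : Odd d)
    (h : d % 4 = 3 ∨ p % 4 = 1) : jacobiSym (-d) p = jacobiSym p d := by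
  rw [jacobiSym.neg _ hp]
  rcases Nat.odd_mod_four_iff.mp (Nat.odd_iff.mp hp) with hp4 | hp4
  · rw [ZMod.χ₄_nat_one_mod_four hp4, one_mul, jacobiSym.quadratic_reciprocity_one_mod_four' hd hp4]
  · rw [ZMod.χ₄_nat_three_mod_four hp4,
      jacobiSym.quadratic_reciprocity_three_mod_four (by lia) hp4, neg_one_mul, neg_neg]

lemma exists_sum_three_sq_of_jacobiSym {n d p : ℕ} (hp : p.Prime) (hp_odd : Odd p) (hd : Odd d)
    (h4 : d % 4 = 3 ∨ p % 4 = 1) (hJ : jacobiSym p d = 1) (hdn : 1 < d * n)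
    (hdvd : (d * n - 1 : ℤ) ∣ 2 * p) : ∃ u v w : ℤ, (n : ℤ) = u ^ 2 + v ^ 2 + w ^ 2 := by
  obtain ⟨h, hh⟩ := exists_two_mul_dvd_sq_add hp hp_odd (d := d) (mod_cast hd)
    (jacobiSym_neg_eq_of_mod_four hp_odd hd h4 ▸ hJ)
  exact exists_sum_three_sq_of_dvd (mod_cast hd.pos) (mod_cast hdn) (hdvd.trans hh)

lemma exists_prime_eq_mul_add {q c : ℕ} (hq : q ≠ 0) (hc : c.Coprime q) :
    ∃ m, (q * m + c).Prime := by
  obtain ⟨p, hcp, hp, hmod⟩ := Nat.forall_exists_prime_gt_and_modEq c hq hc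
  obtain ⟨m, hm⟩ := (Nat.modEq_iff_dvd' hcp.le).mp hmod.symm
  exact ⟨m, by rwa [← hm, Nat.sub_add_cancel hcp.le]⟩

lemma coprime_four_mul {c n : ℕ} (hc : Odd c) (h : c.Coprime n) : c.Coprime (4 * n) :=
  .mul_right (Nat.Coprime.pow_right 2 hc.coprime_two_right) h

/-- Here `d ≡ 1 [4]` and `d n - 1 = p` is a prime with `p ≡ 1 [4]`, so that
`(-d / p) = (p / d) = (-1 / d) = 1`. -/
theorem exists_sum_three_sq_of_mod_four_eq_two {n : ℕ} (hn : n % 4 = 2) :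
    ∃ u v w : ℤ, (n : ℤ) = u ^ 2 + v ^ 2 + w ^ 2 := by
  obtain ⟨j, rfl⟩ : ∃ j, n = 4 * j + 2 := ⟨n / 4, by lia⟩
  have hcop : (4 * j + 1).Coprime (4 * (4 * j + 2)) :=
    coprime_four_mul ⟨2 * j, by ring⟩ (Nat.coprime_self_add_right.mpr (Nat.coprime_one_right _))
  obtain ⟨m, hp⟩ := exists_prime_eq_mul_add (by lia) hcop
  set p := 4 * (4 * j + 2) * m + (4 * j + 1) with hp_def
  have hdn : (4 * m + 1) * (4 * j + 2) = p + 1 := by rw [hp_def]; ring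
  have hd : Odd (4 * m + 1) := ⟨2 * m, by ring⟩
  have hp4 : p % 4 = 1 := by lia
  have hJ : jacobiSym p (4 * m + 1) = 1 := by
    have hmod : (p : ℤ) ≡ -1 [ZMOD (4 * m + 1 : ℕ)] := by
      refine (Int.modEq_iff_dvd.mpr ⟨4 * j + 2, ?_⟩).symm
      zify at hdn
      push_cast
      linear_combination -hdn
    rw [jacobiSym.mod_left' hmod, jacobiSym.at_neg_one hd, ZMod.χ₄_nat_one_mod_four (by lia)]
  refine exists_sum_three_sq_of_jacobiSym hp (Nat.odd_iff.mpr (by lia)) hd (.inr hp4) hJ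
    (by have := hp.pos; lia) ⟨2, ?_⟩
  zify at hdn
  push_cast
  linear_combination -2 * hdn

/-- Here `d ≡ 3 [8]` and `d n - 1 = 2 p` with `p` prime, so that
`(-d / p) = (p / d) = (-2 / d) (p / d) = (-2 p / d) = (1 / d) = 1`. -/
theorem exists_sum_three_sq_of_mod_four_eq_one {n : ℕ} (hn : n % 4 = 1) :
    ∃ u v w : ℤ, (n : ℤ) = u ^ 2 + v ^ 2 + w ^ 2 := by
  obtain ⟨j, rfl⟩ : ∃ j, n = 4 * j + 1 := ⟨n / 4, by lia⟩
  have hcop : (6 * j + 1).Coprime (4 * (4 * j + 1)) :=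
    coprime_four_mul ⟨3 * j, by ring⟩ (Nat.isCoprime_iff_coprime.mp ⟨-2, 3, by push_cast; ring⟩)
  obtain ⟨m, hp⟩ := exists_prime_eq_mul_add (by lia) hcop
  set p := 4 * (4 * j + 1) * m + (6 * j + 1) with hp_def
  have hdn : (8 * m + 3) * (4 * j + 1) = 2 * p + 1 := by rw [hp_def]; ring
  have hd : Odd (8 * m + 3) := ⟨4 * m + 1, by ring⟩
  have hJ : jacobiSym p (8 * m + 3) = 1 := by
    have hneg2 : jacobiSym (-2) (8 * m + 3) = 1 := by
      rw [jacobiSym.at_neg_two hd, ZMod.χ₈'_nat_eq_if_mod_eight, if_neg (by lia), if_pos (by lia)]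
    have hmod : -2 * (p : ℤ) ≡ 1 [ZMOD (8 * m + 3 : ℕ)] := by
      refine Int.modEq_iff_dvd.mpr ⟨4 * j + 1, ?_⟩
      zify at hdn
      push_cast
      linear_combination -hdn
    have hmul := jacobiSym.mul_left (-2) p (8 * m + 3)
    rwa [hneg2, one_mul, jacobiSym.mod_left' hmod, jacobiSym.one_left, eq_comm] at hmul
  refine exists_sum_three_sq_of_jacobiSym hp (Nat.odd_iff.mpr (by lia)) hd (.inl (by lia)) hJ
    (by have := hp.pos; lia) ⟨1, ?_⟩
  zify at hdn
  push_cast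
  linear_combination -hdn

end SumThreeSquares

section DiagonalForms

lemma exists_two_mul_sq_add_two_mul_sq {u v : ℤ} (h : Even (u + v)) :
    ∃ r s, u ^ 2 + v ^ 2 = 2 * r ^ 2 + 2 * s ^ 2 := by
  obtain ⟨r, hr⟩ := h
  obtain rfl : u = r + r - v := by lia
  exact ⟨r, r - v, by ring⟩

lemma exists_sq_add_two_mul_sq_add_two_mul_sq (u v w : ℤ) :
    ∃ t r s, u ^ 2 + v ^ 2 + w ^ 2 = t ^ 2 + 2 * r ^ 2 + 2 * s ^ 2 := by
  have hparity : Even (u + v) ∨ Even (u + w) ∨ Even (v + w) := by grind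
  rcases hparity with h | h | h <;> obtain ⟨r, s, hrs⟩ := exists_two_mul_sq_add_two_mul_sq h
  · exact ⟨w, r, s, by linarith⟩
  · exact ⟨v, r, s, by linarith⟩
  · exact ⟨u, r, s, by linarith⟩

lemma exists_diag_one_two_two_of_mod_four_eq_one {n : ℕ} (hn : n % 4 = 1) :
    ∃ x y z : ℤ, (n : ℤ) = x ^ 2 + 2 * y ^ 2 + 2 * z ^ 2 := by
  obtain ⟨u, v, w, h⟩ := exists_sum_three_sq_of_mod_four_eq_one hn
  exact h ▸ exists_sq_add_two_mul_sq_add_two_mul_sq u v w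

lemma exists_diag_one_one_two_of_odd {n : ℕ} (hn : Odd n) :
    ∃ x y z : ℤ, (n : ℤ) = x ^ 2 + y ^ 2 + 2 * z ^ 2 := by
  obtain ⟨u, v, w, h⟩ := exists_sum_three_sq_of_mod_four_eq_two (n := 2 * n) (by grind)
  obtain ⟨t, r, s, hrs⟩ := exists_sq_add_two_mul_sq_add_two_mul_sq u v w
  obtain ⟨z, rfl⟩ : Even t := by
    have : Even (t ^ 2) := ⟨n - r ^ 2 - s ^ 2, by push_cast at h; lia⟩
    exact (Int.even_pow.mp this).1
  refine ⟨r, s, z, ?_⟩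
  push_cast at h
  linarith

lemma exists_diag_one_two_four_of_odd {n : ℕ} (hn : Odd n) :
    ∃ x y z : ℤ, (n : ℤ) = x ^ 2 + 2 * y ^ 2 + 4 * z ^ 2 := by
  obtain ⟨x, y, z, h⟩ := exists_diag_one_one_two_of_odd hn
  have hxy : Odd (x ^ 2 + y ^ 2) := by grind
  rcases Int.even_or_odd x with ⟨k, rfl⟩ | hx
  · exact ⟨y, z, k, by linarith⟩
  · obtain ⟨k, rfl⟩ : Even y := by simpa [Int.odd_add, Int.even_pow, hx.pow] using hxy
    exact ⟨x, z, k, by linarith⟩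

lemma exists_diag_one_one_two_three (n : ℕ) :
    ∃ x y z t : ℤ, (n : ℤ) = x ^ 2 + y ^ 2 + 2 * z ^ 2 + 3 * t ^ 2 := by
  obtain hn | rfl | rfl | ⟨m, hm, rfl⟩ : Odd n ∨ n = 0 ∨ n = 2 ∨ ∃ m, Odd m ∧ n = m + 3 := by
    rcases Nat.even_or_odd n with hn | hn
    · by_cases h : 3 ≤ n
      · exact .inr (.inr (.inr ⟨n - 3, by grind, by lia⟩))
      · grind
    · exact .inl hn
  · obtain ⟨x, y, z, h⟩ := exists_diag_one_one_two_of_odd hn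
    exact ⟨x, y, z, 0, by linarith⟩
  · exact ⟨0, 0, 0, 0, by norm_num⟩
  · exact ⟨0, 0, 1, 0, by norm_num⟩
  · obtain ⟨x, y, z, h⟩ := exists_diag_one_one_two_of_odd hm
    exact ⟨x, y, z, 1, by push_cast; linarith⟩

lemma exists_diag_one_two_two_six_of_odd {n : ℕ} (hn : Odd n) :
    ∃ x y z t : ℤ, (n : ℤ) = x ^ 2 + 2 * y ^ 2 + 2 * z ^ 2 + 6 * t ^ 2 := by
  obtain hn1 | rfl | ⟨m, hm, rfl⟩ : n % 4 = 1 ∨ n = 3 ∨ ∃ m, m % 4 = 1 ∧ n = m + 6 := by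
    by_cases h : 6 ≤ n
    · rcases Nat.odd_mod_four_iff.mp (Nat.odd_iff.mp hn) with h4 | h4
      · exact .inl h4
      · exact .inr (.inr ⟨n - 6, by lia, by lia⟩)
    · grind
  · obtain ⟨x, y, z, h⟩ := exists_diag_one_two_two_of_mod_four_eq_one hn1
    exact ⟨x, y, z, 0, by linarith⟩
  · exact ⟨1, 1, 0, 0, by norm_num⟩
  · obtain ⟨x, y, z, h⟩ := exists_diag_one_two_two_of_mod_four_eq_one hm
    exact ⟨x, y, z, 1, by push_cast; linarith⟩

theorem exists_diag_one_two_four_twelve (n : ℕ) :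
    ∃ x y z t : ℤ, (n : ℤ) = x ^ 2 + 2 * y ^ 2 + 4 * z ^ 2 + 12 * t ^ 2 := by
  rcases Nat.even_or_odd' n with ⟨m, rfl | rfl⟩
  · rcases Nat.even_or_odd' m with ⟨k, rfl | rfl⟩
    · obtain ⟨x, y, z, t, h⟩ := exists_diag_one_one_two_three k
      exact ⟨2 * x, 2 * z, y, t, by push_cast; rw [h]; ring⟩
    · obtain ⟨x, y, z, t, h⟩ := exists_diag_one_two_two_six_of_odd (odd_two_mul_add_one k)
      exact ⟨2 * y, x, z, t, by rw [Nat.cast_mul, h]; push_cast; ring⟩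
  · obtain ⟨x, y, z, h⟩ := exists_diag_one_two_four_of_odd (odd_two_mul_add_one m)
    exact ⟨x, y, z, 0, by rw [h]; ring⟩

end DiagonalForms

section QuaternaryForm

/-- The form `a x² + b y² + 4 (z² + z w + w²)` takes the value `n` at an integral point. The
parameters are integers, so that the natural numbers of the theorem enter through their casts. -/
def Represents (a b n : ℤ) : Prop :=
  ∃ x y z w : ℤ, n = a * x ^ 2 + b * y ^ 2 + 4 * (z ^ 2 + z * w + w ^ 2)

lemma sq_add_mul_add_sq_nonneg (z w : ℤ) : 0 ≤ z ^ 2 + z * w + w ^ 2 := by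
  nlinarith [sq_nonneg (z + w), sq_nonneg z, sq_nonneg w]

lemma le_mul_sq {a x : ℤ} (ha : 0 ≤ a) (hx : x ≠ 0) : a ≤ a * x ^ 2 :=
  le_mul_of_one_le_right ha (Order.one_le_iff_pos.mpr (sq_pos_iff.mpr hx))

lemma Represents.eq_one_of_one {a b : ℤ} (ha : 0 < a) (hab : a ≤ b) (h : Represents a b 1) :
    a = 1 := by
  obtain ⟨x, y, z, w, h⟩ := h
  have hzw := sq_add_mul_add_sq_nonneg z w
  have hle : a ≤ a * x ^ 2 + b * y ^ 2 := by
    have hb : 0 ≤ b := ha.le.trans hab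
    rcases eq_or_ne x 0 with rfl | hx
    · have hy : y ≠ 0 := by rintro rfl; lia
      linarith [le_mul_sq hb hy]
    · linarith [le_mul_sq ha.le hx, mul_nonneg hb (sq_nonneg y)]
  lia

lemma sq_mod_four (x : ℤ) : x ^ 2 % 4 = 0 ∨ x ^ 2 % 4 = 1 := by
  rcases Int.even_or_odd x with ⟨k, rfl⟩ | hx
  · exact .inl (Int.emod_eq_zero_of_dvd ⟨k ^ 2, by ring⟩)
  · exact .inr (Int.sq_mod_four_eq_one_of_odd hx)

lemma Represents.le_two_of_two {b : ℤ} (hb : 0 ≤ b) (h : Represents 1 b 2) : b ≤ 2 := by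
  obtain ⟨x, y, z, w, h⟩ := h
  have hzw := sq_add_mul_add_sq_nonneg z w
  have hy : y ≠ 0 := by
    rintro rfl
    rcases sq_mod_four x with hx | hx <;> lia
  linarith [le_mul_sq hb hy, sq_nonneg x]

lemma not_represents_one_one_three : ¬ Represents 1 1 3 := by
  rintro ⟨x, y, z, w, h⟩
  rcases sq_mod_four x with hx | hx <;>
    rcases sq_mod_four y with hy | hy <;> lia

lemma represents_one_two (n : ℕ) : Represents 1 2 n := by
  obtain ⟨x, y, s, t, h⟩ := exists_diag_one_two_four_twelve n
  exact ⟨x, y, s - t, 2 * t, by rw [h]; ring⟩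

end QuaternaryForm

theorem stmt_16 (a b : ℕ) (ha : 0 < a) (hb : 0 < b) (hab : a ≤ b) :
    (∀ n : ℕ, ∃ x y z w : ℤ,
      (n : ℤ) = a * x ^ 2 + b * y ^ 2 + 4 * (z ^ 2 + z * w + w ^ 2)) ↔
    (a = 1 ∧ b = 2) := by
  change (∀ n : ℕ, Represents a b n) ↔ _
  constructor
  · intro h
    obtain rfl : a = 1 := by
      exact_mod_cast (h 1).eq_one_of_one (mod_cast ha) (mod_cast hab)
    have hb2 : b ≤ 2 := by exact_mod_cast (h 2).le_two_of_two (Int.natCast_nonneg b)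
    have hb1 : b ≠ 1 := by
      rintro rfl
      exact not_represents_one_one_three (h 3)
    exact ⟨rfl, by lia⟩
  · rintro ⟨rfl, rfl⟩
    exact represents_one_two
end

section
/- Let a, b be positive integers with a ≤ b. If the quadratic form f^{a,b}_4(x,y,z,w) = a·x² + b·y² + 4·(z² + z·w + w²) represents each of the integers 1, 2, 3 (with x, y, z, w ∈ ℤ), then it represents every nonnegative integer. -/
/-!
Representing `1` and `2` forces `a = 1` and `b ≤ 2`, and then `3` forces `b = 2`. The form
`x² + 2y² + 4z²` represents every `n` for which `2n` is a sum of three squares, hence all `n` except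
those of the form `4ᵏ(16m + 14) = 4ᵏ(2(8m + 1) + 12)`. For these, `2(8m + 1) = x² + 2y² + 4z²`,
and `4((z - 1)² + 2(z - 1) + 2²) = 4z² + 12` supplies the missing `12`.

Three squares are obtained following Dirichlet: by Hermite reduction, a positive definite integral
ternary form of determinant one is equivalent to the sum of three squares, so it suffices to embed
`n` in the diagonal of such a form. This asks for `d, e, u` with `e + 1 = dn` and `e ∣ u² + d`; one
takes `e` to be a prime or twice a prime in a suitable progression and applies Jacobi reciprocity.
-/

open Matrix
open scoped MatrixGroups NumberTheorySymbols

lemma exists_four_mul_sq_add_mul_le (k : ℤ) {α : ℤ} (hα : 0 < α) :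
    ∃ m : ℤ, 4 * (k + m * α) ^ 2 ≤ α ^ 2 := by
  have hround : |(k : ℚ) / α - round ((k : ℚ) / α)| ≤ 1 / 2 := abs_sub_round _
  set r := round ((k : ℚ) / α)
  have hα' : (0 : ℚ) < α := by exact_mod_cast hα
  have habs : |2 * ((k : ℚ) - r * α)| ≤ α := by
    rw [show 2 * ((k : ℚ) - r * α) = (k / α - r) * (2 * α) by field_simp, abs_mul,
      abs_of_pos (by positivity : (0 : ℚ) < 2 * α)]
    nlinarith
  refine ⟨-r, ?_⟩
  have hsq : (2 * (k - r * α)) ^ 2 ≤ α ^ 2 := sq_le_sq' (by exact_mod_cast (abs_le.1 habs).1)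
    (by exact_mod_cast (abs_le.1 habs).2)
  linarith

lemma three_mul_sq_le_four_mul_of_forall_le {α β γ : ℤ} (hα : 0 < α)
    (hmin : ∀ m : ℤ, α ≤ γ + 2 * m * β + m ^ 2 * α) : 3 * α ^ 2 ≤ 4 * (α * γ - β ^ 2) := by
  obtain ⟨m, hm⟩ := exists_four_mul_sq_add_mul_le β hα
  have : α ^ 2 ≤ (α * γ - β ^ 2) + (β + m * α) ^ 2 :=
    calc α ^ 2 = α * α := sq α
      _ ≤ α * (γ + 2 * m * β + m ^ 2 * α) := by gcongr; exact hmin m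
      _ = _ := by ring
  linarith

/-- The leading principal `2 × 2` minor of a symmetric `3 × 3` matrix; the product `A 0 1 * A 1 0`
is written as a square, so this is the minor only for symmetric `A`. -/
def minorTwo {R : Type*} [CommRing R] (A : Matrix (Fin 3) (Fin 3) R) : R :=
  A 0 0 * A 1 1 - A 0 1 ^ 2

section PosDef

variable {R : Type*} [CommRing R] [LinearOrder R] [IsStrictOrderedRing R] [StarRing R]
  [TrivialStar R] {A : Matrix (Fin 3) (Fin 3) R}

lemma minorTwo_pos_of_posDef (hA : A.PosDef) : 0 < minorTwo A := by
  have hsymm : A 1 0 = A 0 1 := by simpa using hA.isHermitian.apply 0 1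
  have ha : 0 < A 0 0 := hA.diag_pos
  have hval : 0 < A 0 0 * minorTwo A := by
    have := hA.dotProduct_mulVec_pos (x := ![-A 0 1, A 0 0, 0]) fun h ↦ ha.ne' (congrFun h 1)
    simp only [star_trivial, dotProduct, mulVec, Fin.sum_univ_three, cons_val_zero, cons_val_one,
      cons_val, hsymm] at this
    unfold minorTwo
    linear_combination this
  exact pos_of_mul_pos_right hval ha.le

lemma posDef_of_minors_pos (hsymm : A.IsSymm) (ha : 0 < A 0 0) (hK : 0 < minorTwo A)
    (hdet : 0 < A.det) : A.PosDef := by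
  refine .of_dotProduct_mulVec_pos (by simpa) fun x hx ↦ ?_
  have h01 : A 1 0 = A 0 1 := hsymm.apply 0 1
  have h02 : A 2 0 = A 0 2 := hsymm.apply 0 2
  have h12 : A 2 1 = A 1 2 := hsymm.apply 1 2
  have jacobi : A 0 0 * minorTwo A * (star x ⬝ᵥ A *ᵥ x) =
      minorTwo A * (A 0 0 * x 0 + A 0 1 * x 1 + A 0 2 * x 2) ^ 2
        + (minorTwo A * x 1 + (A 0 0 * A 1 2 - A 0 2 * A 0 1) * x 2) ^ 2
        + A 0 0 * A.det * x 2 ^ 2 := by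
    simp only [det_fin_three, minorTwo, star_trivial, dotProduct, mulVec, Fin.sum_univ_three,
      h01, h02, h12]
    ring
  refine pos_of_mul_pos_right (jacobi ▸ ?_) (mul_pos ha hK).le
  by_cases h2 : x 2 = 0
  · by_cases h1 : x 1 = 0
    · have h0 : x 0 ≠ 0 := fun h0 ↦ hx (by ext i; fin_cases i <;> assumption)
      simp only [h1, h2, mul_zero, add_zero, zero_pow two_ne_zero]
      positivity
    · simp only [h2, mul_zero, add_zero, zero_pow two_ne_zero]
      positivity
  · positivity

end PosDef

section ChangeBasis

variable {n R : Type*} [Fintype n] [DecidableEq n] [CommRing R]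

/-- The Gram matrix `Uᵀ * A * U` of the form with Gram matrix `A` in the basis formed by the
columns of `U`. -/
def changeBasis (A : Matrix n n R) (U : Matrix.SpecialLinearGroup n R) : Matrix n n R :=
  U.1ᵀ * A * U.1

lemma changeBasis_changeBasis (A : Matrix n n R) (U V : Matrix.SpecialLinearGroup n R) :
    changeBasis (changeBasis A U) V = changeBasis A (U * V) := by
  simp only [changeBasis, Matrix.SpecialLinearGroup.coe_mul, transpose_mul, mul_assoc]

lemma changeBasis_changeBasis_inv (A : Matrix n n R) (U : Matrix.SpecialLinearGroup n R) :
    changeBasis (changeBasis A U) U⁻¹ = A := by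
  rw [changeBasis_changeBasis, mul_inv_cancel]
  simp [changeBasis]

lemma det_changeBasis (A : Matrix n n R) (U : Matrix.SpecialLinearGroup n R) :
    (changeBasis A U).det = A.det := by
  simp [changeBasis]

lemma posDef_changeBasis [PartialOrder R] [StarRing R] [TrivialStar R] {A : Matrix n n R}
    (hA : A.PosDef) (U : Matrix.SpecialLinearGroup n R) : (changeBasis A U).PosDef := by
  rw [changeBasis, ← conjTranspose_eq_transpose_of_trivial]
  exact hA.conjTranspose_mul_mul_same (mulVec_injective_of_isUnit (by simp [isUnit_iff_isUnit_det]))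

end ChangeBasis

/-- Hermite's reduction conditions on the Gram matrix `A` of a ternary form `Q`. Two binary forms
are required to have a leading coefficient that no unimodular substitution `(x, y) ↦ (m * x - y, x)`
decreases: the restriction of `Q` to the first two coordinates, and the form
`A 0 0 * Q - (A 0 0 * x + A 0 1 * y + A 0 2 * z) ^ 2` in `y` and `z`, whose leading coefficient is
`minorTwo A` and whose determinant is `A 0 0 * A.det`. -/
structure IsHermiteReduced_s17 (A : Matrix (Fin 3) (Fin 3) ℤ) : Prop where
  apply_zero_zero_le (m : ℤ) : A 0 0 ≤ A 1 1 + 2 * m * A 0 1 + m ^ 2 * A 0 0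
  minorTwo_le (m : ℤ) : minorTwo A ≤ (A 0 0 * A 2 2 - A 0 2 ^ 2)
    + 2 * m * (A 0 0 * A 1 2 - A 0 1 * A 0 2) + m ^ 2 * minorTwo A

/-- The change of basis to `m * e₀ + e₁`, `-e₀`, `e₂`. -/
def swapShear₀₁ (m : ℤ) : SL(3, ℤ) := ⟨!![m, -1, 0; 1, 0, 0; 0, 0, 1], by simp [det_fin_three]⟩

/-- The change of basis to `e₀`, `m * e₁ + e₂`, `-e₁`; it leaves `A 0 0` unchanged. -/
def swapShear₁₂ (m : ℤ) : SL(3, ℤ) := ⟨!![1, 0, 0; 0, m, -1; 0, 1, 0], by simp [det_fin_three]⟩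

section HermiteReduction

variable {A : Matrix (Fin 3) (Fin 3) ℤ}

lemma changeBasis_swapShear₀₁_apply_zero_zero (hA : A.IsSymm) (m : ℤ) :
    changeBasis A (swapShear₀₁ m) 0 0 = A 1 1 + 2 * m * A 0 1 + m ^ 2 * A 0 0 := by
  have h01 : A 1 0 = A 0 1 := hA.apply 0 1
  simp only [changeBasis, swapShear₀₁, mul_apply, transpose_apply, of_apply, cons_val',
    cons_val_zero, cons_val_one, cons_val_fin_one, cons_val, Fin.sum_univ_three, h01]
  ring

lemma changeBasis_swapShear₁₂_apply_zero_zero (A : Matrix (Fin 3) (Fin 3) ℤ) (m : ℤ) :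
    changeBasis A (swapShear₁₂ m) 0 0 = A 0 0 := by
  simp [changeBasis, swapShear₁₂, mul_apply, Fin.sum_univ_three]

lemma minorTwo_changeBasis_swapShear₁₂ (hA : A.IsSymm) (m : ℤ) :
    minorTwo (changeBasis A (swapShear₁₂ m)) = (A 0 0 * A 2 2 - A 0 2 ^ 2)
      + 2 * m * (A 0 0 * A 1 2 - A 0 1 * A 0 2) + m ^ 2 * minorTwo A := by
  have h12 : A 2 1 = A 1 2 := hA.apply 1 2
  simp only [changeBasis, minorTwo, swapShear₁₂, mul_apply, transpose_apply, of_apply, cons_val',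
    cons_val_zero, cons_val_one, cons_val_fin_one, cons_val, Fin.sum_univ_three, h12]
  ring

lemma exists_isHermiteReduced_changeBasis (hA : A.PosDef) :
    ∃ U : SL(3, ℤ), IsHermiteReduced_s17 (changeBasis A U) := by
  -- Since `swapShear₁₂` preserves the entry `0 0`, a lexicographic minimum has both properties.
  let size (M : Matrix (Fin 3) (Fin 3) ℤ) := toLex ((M 0 0).toNat, (minorTwo M).toNat)
  obtain ⟨U, hU⟩ : ∃ U : SL(3, ℤ), ∀ V, size (changeBasis A U) ≤ size (changeBasis A V) :=
    ⟨_, fun V ↦ Function.argmin_le (fun U : SL(3, ℤ) ↦ size (changeBasis A U)) V⟩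
  refine ⟨U, ?_⟩
  have hB := posDef_changeBasis hA U
  set B := changeBasis A U
  have hsymm : B.IsSymm := by simpa using hB.isHermitian
  have hmin (V : SL(3, ℤ)) : size B ≤ size (changeBasis B V) := by
    rw [changeBasis_changeBasis]
    exact hU (U * V)
  have ha : 0 < B 0 0 := hB.diag_pos
  have hK : 0 < minorTwo B := minorTwo_pos_of_posDef hB
  refine ⟨fun m ↦ ?_, fun m ↦ ?_⟩
  · have hlex := Prod.Lex.toLex_le_toLex.1 (hmin (swapShear₀₁ m))
    rw [changeBasis_swapShear₀₁_apply_zero_zero hsymm] at hlex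
    omega
  · have hlex := Prod.Lex.toLex_le_toLex.1 (hmin (swapShear₁₂ m))
    rw [changeBasis_swapShear₁₂_apply_zero_zero, minorTwo_changeBasis_swapShear₁₂ hsymm] at hlex
    omega

lemma IsHermiteReduced_s17.exists_eq_transpose_mul_self (hred : IsHermiteReduced_s17 A)
    (hA : A.PosDef) (hdet : A.det = 1) : ∃ P : Matrix (Fin 3) (Fin 3) ℤ, A = Pᵀ * P := by
  have h01 : A 1 0 = A 0 1 := hA.isHermitian.apply 0 1
  have h02 : A 2 0 = A 0 2 := hA.isHermitian.apply 0 2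
  have h12 : A 2 1 = A 1 2 := hA.isHermitian.apply 1 2
  have ha : 0 < A 0 0 := hA.diag_pos
  have hK : 0 < minorTwo A := minorTwo_pos_of_posDef hA
  have hdisc : minorTwo A * (A 0 0 * A 2 2 - A 0 2 ^ 2) - (A 0 0 * A 1 2 - A 0 1 * A 0 2) ^ 2 =
      A 0 0 := by
    rw [det_fin_three, h01, h02, h12] at hdet
    unfold minorTwo
    linear_combination A 0 0 * hdet
  have haK : 3 * A 0 0 ^ 2 ≤ 4 * minorTwo A :=
    three_mul_sq_le_four_mul_of_forall_le ha hred.apply_zero_zero_le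
  have hKa : 3 * minorTwo A ^ 2 ≤ 4 * A 0 0 :=
    hdisc ▸ three_mul_sq_le_four_mul_of_forall_le hK hred.minorTwo_le
  have ha1 : A 0 0 = 1 := by nlinarith
  have hK1 : minorTwo A = 1 := by nlinarith
  have hb : A 1 1 = 1 + A 0 1 ^ 2 := by
    rw [minorTwo, ha1] at hK1
    linarith
  have hc : A 2 2 = 1 + A 0 2 ^ 2 + (A 1 2 - A 0 1 * A 0 2) ^ 2 := by
    rw [ha1, hK1] at hdisc
    linarith
  refine ⟨!![1, A 0 1, A 0 2; 0, 1, A 1 2 - A 0 1 * A 0 2; 0, 0, 1], ?_⟩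
  ext i j
  fin_cases i <;> fin_cases j <;>
    simp [mul_apply, Fin.sum_univ_three, ha1, hb, hc, h01, h02, h12] <;> ring

theorem exists_eq_transpose_mul_self_of_posDef (hA : A.PosDef)
    (hdet : A.det = 1) : ∃ P : Matrix (Fin 3) (Fin 3) ℤ, A = Pᵀ * P := by
  obtain ⟨U, hU⟩ := exists_isHermiteReduced_changeBasis hA
  obtain ⟨P, hP⟩ := hU.exists_eq_transpose_mul_self (posDef_changeBasis hA U)
    (by rw [det_changeBasis, hdet])
  refine ⟨P * (U⁻¹ : SL(3, ℤ)).1, ?_⟩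
  rw [← changeBasis_changeBasis_inv A U, hP, changeBasis]
  simp only [transpose_mul, mul_assoc]

end HermiteReduction

/-- `n` is a sum of three integer squares. -/
def IsSumThreeSq (n : ℤ) : Prop :=
  ∃ x y z : ℤ, n = x ^ 2 + y ^ 2 + z ^ 2

lemma IsSumThreeSq.sq_mul {n : ℤ} (h : IsSumThreeSq n) (k : ℤ) : IsSumThreeSq (k ^ 2 * n) := by
  obtain ⟨x, y, z, rfl⟩ := h
  exact ⟨k * x, k * y, k * z, by ring⟩

lemma isSumThreeSq_of_dvd_sq_add {n d e u : ℤ} (hd : 0 < d) (he : 0 < e) (hde : e + 1 = d * n)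
    (hdvd : e ∣ u ^ 2 + d) : IsSumThreeSq n := by
  obtain ⟨v, hv⟩ := hdvd
  let A : Matrix (Fin 3) (Fin 3) ℤ := !![e, u, 0; u, v, 1; 0, 1, n]
  have hsymm : A.IsSymm := by
    ext i j
    fin_cases i <;> fin_cases j <;> rfl
  have hminor : minorTwo A = d := by
    simp only [minorTwo, A, of_apply, cons_val', cons_val_zero, cons_val_one]
    linarith
  have hdet : A.det = 1 := by
    simp only [A, det_fin_three, of_apply, cons_val', cons_val_zero, cons_val_one, cons_val]
    linear_combination -n * hv - hde
  obtain ⟨P, hP⟩ := exists_eq_transpose_mul_self_of_posDef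
    (posDef_of_minors_pos hsymm he (hminor ▸ hd) (hdet ▸ one_pos)) hdet
  refine ⟨P 0 2, P 1 2, P 2 2, ?_⟩
  calc n = A 2 2 := rfl
    _ = _ := by rw [hP, mul_apply, Fin.sum_univ_three]; simp only [transpose_apply, sq]

section Reciprocity

lemma exists_dvd_sq_sub_of_jacobiSym_eq_one {p : ℕ} (hp : p.Prime) {a : ℤ} (h : J(a | p) = 1) :
    ∃ u : ℤ, (p : ℤ) ∣ u ^ 2 - a := by
  have := Fact.mk hp
  obtain ⟨v, hv⟩ := ZMod.isSquare_of_jacobiSym_eq_one h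
  obtain ⟨u, rfl⟩ := ZMod.intCast_surjective v
  refine ⟨u, (ZMod.intCast_eq_intCast_iff_dvd_sub _ _ p).1 ?_⟩
  rw [hv, Int.cast_pow, sq]

lemma exists_two_mul_dvd_sq_sub {m a u : ℤ} (hm : Odd m) (h : m ∣ u ^ 2 - a) :
    ∃ v : ℤ, 2 * m ∣ v ^ 2 - a := by
  refine ⟨u + m * (u - a), (Int.isCoprime_two_left.2 hm).mul_dvd ?_ ?_⟩
  · rw [← even_iff_two_dvd]
    have := Int.not_even_iff_odd.2 hm
    by_cases hu : Even u <;> by_cases ha : Even a <;> simp [*, parity_simps]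
  · rw [show (u + m * (u - a)) ^ 2 - a =
      (u ^ 2 - a) + m * (2 * u * (u - a) + m * (u - a) ^ 2) by ring]
    exact h.add (dvd_mul_right _ _)

lemma jacobiSym_neg_natCast {d p : ℕ} (hd : Odd d) (hp : Odd p) (h : d % 4 = 3 ∨ p % 4 = 1) :
    J(-d | p) = J(p | d) := by
  rw [jacobiSym.neg _ hp]
  rcases Nat.odd_mod_four_iff.1 (Nat.odd_iff.1 hp) with hp4 | hp4
  · rw [ZMod.χ₄_nat_one_mod_four hp4, one_mul, jacobiSym.quadratic_reciprocity_one_mod_four' hd hp4]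
  · rw [ZMod.χ₄_nat_three_mod_four hp4,
      jacobiSym.quadratic_reciprocity_three_mod_four (by omega) hp4, neg_one_mul, neg_neg]

lemma jacobiSym_eq_one_of_mul_add_one_eq {k p d n : ℕ} (h : k * p + 1 = d * n)
    (hk : J(-k | d) = 1) : J(p | d) = 1 := by
  have hmul : J(-k * p | d) = 1 := by
    rw [jacobiSym.mod_left' (a₂ := 1), jacobiSym.one_left]
    have h' : (k : ℤ) * p + 1 = d * n := by exact_mod_cast h
    exact Int.modEq_iff_dvd.2 ⟨n, by linear_combination h'⟩
  rwa [jacobiSym.mul_left, hk, one_mul] at hmul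

lemma exists_dvd_sq_add_of_mul_add_one_eq {k p d n : ℕ} (hp : p.Prime) (hd : Odd d)
    (hp_odd : Odd p) (hdp : d % 4 = 3 ∨ p % 4 = 1) (h : k * p + 1 = d * n)
    (hk : J(-k | d) = 1) : ∃ u : ℤ, (p : ℤ) ∣ u ^ 2 + d := by
  simpa only [sub_neg_eq_add] using exists_dvd_sq_sub_of_jacobiSym_eq_one hp
    ((jacobiSym_neg_natCast hd hp_odd hdp).trans (jacobiSym_eq_one_of_mul_add_one_eq h hk))

end Reciprocity

lemma exists_prime_mul_add_one_eq {N k c g n : ℕ} (hN : N ≠ 0) (hg : g.Coprime N)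
    (h : k * g + 1 = c * n) :
    ∃ p d : ℕ, p.Prime ∧ k * p + 1 = d * n ∧ p ≡ g [MOD N] ∧ d ≡ c [MOD N * k] := by
  have hgn : g.Coprime n := by
    refine Nat.isCoprime_iff_coprime.1 ⟨-k, c, ?_⟩
    have h' : (k : ℤ) * g + 1 = c * n := by exact_mod_cast h
    linear_combination -h'
  have hn : n ≠ 0 := by
    rintro rfl
    simp at h
  obtain ⟨p, hgp, hp, hmod⟩ :=
    Nat.forall_exists_prime_gt_and_modEq g (mul_ne_zero hN hn) (hg.mul_right hgn)
  obtain ⟨v, hv⟩ := (Nat.modEq_iff_dvd' hgp.le).1 hmod.symm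
  obtain rfl : p = g + N * n * v := by omega
  refine ⟨_, c + N * k * v, hp, ?_, hmod.of_mul_right n, ?_⟩
  · linear_combination h
  · simp [Nat.ModEq]

lemma isSumThreeSq_of_mod_four_eq_two {n : ℕ} (hn : n % 4 = 2) : IsSumThreeSq n := by
  obtain ⟨p, d, hp, hpd, hpmod, hdmod⟩ := exists_prime_mul_add_one_eq (N := 4) (k := 1) (c := 1)
    (g := n - 1) (n := n) four_ne_zero
    (Nat.Coprime.pow_right 2 (Nat.coprime_two_right.2 (Nat.odd_iff.2 (by omega)))) (by omega)
  rw [Nat.ModEq] at hpmod hdmod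
  have hd : Odd d := Nat.odd_iff.2 (by omega)
  have hk : J(-(1 : ℕ) | d) = 1 := by
    rw [Nat.cast_one, jacobiSym.at_neg_one hd, ZMod.χ₄_nat_one_mod_four (by omega)]
  obtain ⟨u, hu⟩ := exists_dvd_sq_add_of_mul_add_one_eq hp hd (Nat.odd_iff.2 (by omega))
    (.inr (by omega)) hpd hk
  rw [one_mul] at hpd
  exact isSumThreeSq_of_dvd_sq_add (d := d) (by exact_mod_cast hd.pos) (by exact_mod_cast hp.pos)
    (by exact_mod_cast hpd) hu

lemma isSumThreeSq_of_odd {n : ℕ} (hn : n % 2 = 1) (hn7 : n % 8 ≠ 7) : IsSumThreeSq n := by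
  -- With `d ≡ c` modulo `8` and `p ≡ g` modulo `4`, both cases have `J(-2 | d) = 1` and satisfy
  -- `d % 4 = 3 ∨ p % 4 = 1`.
  obtain ⟨c, g, hcg, hc⟩ : ∃ c g, 2 * g + 1 = c * n ∧ (c = 3 ∧ g % 2 = 1 ∨ c = 1 ∧ g % 4 = 1) := by
    by_cases hn3 : n % 8 = 3
    · exact ⟨1, n / 2, by omega⟩
    · exact ⟨3, 3 * n / 2, by omega⟩
  obtain ⟨p, d, hp, hpd, hpmod, hdmod⟩ := exists_prime_mul_add_one_eq (N := 4) four_ne_zero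
    (Nat.Coprime.pow_right 2 (Nat.coprime_two_right.2 (Nat.odd_iff.2 (by omega)))) hcg
  rw [Nat.ModEq] at hpmod hdmod
  have hd : Odd d := Nat.odd_iff.2 (by omega)
  have hp_odd : Odd p := Nat.odd_iff.2 (by omega)
  have hk : J(-(2 : ℕ) | d) = 1 := by
    rw [Nat.cast_two, jacobiSym.at_neg_two hd, ZMod.χ₈'_nat_eq_if_mod_eight, if_neg (by omega),
      if_pos (by omega)]
  obtain ⟨u, hu⟩ := exists_dvd_sq_add_of_mul_add_one_eq hp hd hp_odd (by omega) hpd hk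
  rw [← sub_neg_eq_add] at hu
  obtain ⟨v, hv⟩ := exists_two_mul_dvd_sq_sub (by exact_mod_cast hp_odd) hu
  rw [sub_neg_eq_add] at hv
  exact isSumThreeSq_of_dvd_sq_add (by exact_mod_cast hd.pos)
    (mul_pos two_pos (by exact_mod_cast hp.pos)) (by exact_mod_cast hpd) hv

lemma two_pow_sq (k : ℕ) : ((2 : ℤ) ^ k) ^ 2 = 4 ^ k := by
  rw [pow_right_comm]
  norm_num

theorem isSumThreeSq_of_ne {n : ℕ} (hn : ∀ k m : ℕ, n ≠ 4 ^ k * (8 * m + 7)) :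
    IsSumThreeSq n := by
  rcases eq_or_ne n 0 with rfl | hn0
  · exact ⟨0, 0, 0, rfl⟩
  obtain ⟨k, r, hr, rfl⟩ := Nat.exists_eq_pow_mul_and_not_dvd hn0 4 (by norm_num)
  have hr7 : r % 8 ≠ 7 := fun h ↦ hn k (r / 8) (by congr 1; omega)
  have hr_sum : IsSumThreeSq r := by
    rcases Nat.mod_two_eq_zero_or_one r with hr2 | hr2
    · exact isSumThreeSq_of_mod_four_eq_two (by omega)
    · exact isSumThreeSq_of_odd hr2 hr7
  convert hr_sum.sq_mul (2 ^ k) using 1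
  rw [two_pow_sq, Nat.cast_mul, Nat.cast_pow, Nat.cast_ofNat]

lemma IsSumThreeSq.exists_eq_sq_add_two_mul_sq_add_two_mul_sq {n : ℤ} (h : IsSumThreeSq n) :
    ∃ x y z : ℤ, n = x ^ 2 + 2 * y ^ 2 + 2 * z ^ 2 := by
  have of_even_add {x y z : ℤ} (hxy : Even (x + y)) :
      ∃ a b c : ℤ, x ^ 2 + y ^ 2 + z ^ 2 = a ^ 2 + 2 * b ^ 2 + 2 * c ^ 2 := by
    obtain ⟨b, hb⟩ := hxy
    obtain rfl : x = b + b - y := by omega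
    exact ⟨z, b, b - y, by ring⟩
  obtain ⟨x, y, z, rfl⟩ := h
  rcases (by grind : Even (x + y) ∨ Even (x + z) ∨ Even (y + z)) with hxy | hxz | hyz
  · exact of_even_add hxy
  · rw [add_right_comm]
    exact of_even_add hxz
  · rw [add_assoc, add_comm]
    exact of_even_add hyz

lemma exists_eq_sq_add_two_mul_sq_add_four_mul_sq {n : ℤ} (h : IsSumThreeSq (2 * n)) :
    ∃ x y z : ℤ, n = x ^ 2 + 2 * y ^ 2 + 4 * z ^ 2 := by
  obtain ⟨x, y, z, hxyz⟩ := h.exists_eq_sq_add_two_mul_sq_add_two_mul_sq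
  obtain ⟨e, rfl⟩ : Even x := by
    have : Even (x ^ 2) := ⟨n - y ^ 2 - z ^ 2, by linarith⟩
    exact (Int.even_pow.1 this).1
  obtain rfl : n = 2 * e ^ 2 + y ^ 2 + z ^ 2 := by linarith
  rcases Int.even_or_odd' y with ⟨s, rfl | rfl⟩
  · exact ⟨z, e, s, by ring⟩
  rcases Int.even_or_odd' z with ⟨t, rfl | rfl⟩
  · exact ⟨2 * s + 1, e, t, by ring⟩
  -- For odd `y` and `z`, the number `n / 2` is a sum of three squares by the parallelogram law.
  have half : IsSumThreeSq (e ^ 2 + (s + t + 1) ^ 2 + (s - t) ^ 2) := ⟨_, _, _, rfl⟩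
  obtain ⟨a, b, c, habc⟩ := half.exists_eq_sq_add_two_mul_sq_add_two_mul_sq
  exact ⟨2 * b, a, c, by linear_combination 2 * habc⟩

theorem exists_eq_sq_add_two_mul_sq_add_four_mul (n : ℕ) :
    ∃ x y z w : ℤ, (n : ℤ) = x ^ 2 + 2 * y ^ 2 + 4 * (z ^ 2 + z * w + w ^ 2) := by
  by_cases hn : ∀ k m : ℕ, 2 * n ≠ 4 ^ k * (8 * m + 7)
  · obtain ⟨x, y, z, h⟩ := exists_eq_sq_add_two_mul_sq_add_four_mul_sq (n := n)
      (by exact_mod_cast isSumThreeSq_of_ne hn)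
    exact ⟨x, y, z, 0, by rw [h]; ring⟩
  · push Not at hn
    obtain ⟨_ | k, m, h⟩ := hn
    · omega
    have hodd : IsSumThreeSq (8 * m + 1 : ℕ) := isSumThreeSq_of_odd (by omega) (by omega)
    obtain ⟨x, y, z, hxyz⟩ := exists_eq_sq_add_two_mul_sq_add_four_mul_sq (n := 2 * (8 * m + 1))
      (by convert hodd.sq_mul 2 using 1; push_cast; ring)
    refine ⟨2 ^ k * x, 2 ^ k * y, 2 ^ k * (z - 1), 2 ^ k * 2, ?_⟩
    have hn : (n : ℤ) = (2 ^ k) ^ 2 * (2 * (8 * m + 1) + 12) := by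
      zify at h
      rw [pow_succ, ← two_pow_sq k] at h
      linarith
    rw [hn, hxyz]
    ring

lemma sq_eq_zero_or_one_of_mul_lt_four {c t : ℤ} (hc : 0 < c) (h : c * t ^ 2 < 4) :
    t ^ 2 = 0 ∨ t ^ 2 = 1 := by
  have hsq : t ^ 2 < 2 ^ 2 := by nlinarith [sq_nonneg t]
  obtain ⟨hlt, hgt⟩ := abs_lt.1 (abs_lt_of_sq_lt_sq hsq zero_le_two)
  interval_cases t <;> norm_num

lemma eq_zero_or_eq_or_eq_or_eq_add_of_lt_four {a b n x y z w : ℤ} (ha : 0 < a) (hb : 0 < b)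
    (hn : n < 4) (h : n = a * x ^ 2 + b * y ^ 2 + 4 * (z ^ 2 + z * w + w ^ 2)) :
    n = 0 ∨ n = a ∨ n = b ∨ n = a + b := by
  have hx : 0 ≤ a * x ^ 2 := by positivity
  have hy : 0 ≤ b * y ^ 2 := by positivity
  have hzw : 0 ≤ z ^ 2 + z * w + w ^ 2 := by nlinarith [sq_nonneg (z + w), sq_nonneg z, sq_nonneg w]
  have hzw0 : z ^ 2 + z * w + w ^ 2 = 0 := by omega
  rcases sq_eq_zero_or_one_of_mul_lt_four ha (by omega : a * x ^ 2 < 4) with hx | hx <;>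
    rcases sq_eq_zero_or_one_of_mul_lt_four hb (by omega : b * y ^ 2 < 4) with hy | hy <;>
    simp [h, hx, hy, hzw0]

theorem stmt_17 (a b : ℕ) (ha : 0 < a) (hb : 0 < b) (hab : a ≤ b)
    (h : ∀ n ∈ ({1, 2, 3} : Set ℕ), ∃ x y z w : ℤ,
      (n : ℤ) = a * x ^ 2 + b * y ^ 2 + 4 * (z ^ 2 + z * w + w ^ 2)) :
    ∀ n : ℕ, ∃ x y z w : ℤ,
      (n : ℤ) = a * x ^ 2 + b * y ^ 2 + 4 * (z ^ 2 + z * w + w ^ 2) := by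
  have value_of_mem (n : ℕ) (hn : n ∈ ({1, 2, 3} : Set ℕ)) (hn4 : n < 4) :
      n = 0 ∨ n = a ∨ n = b ∨ n = a + b := by
    obtain ⟨x, y, z, w, hxyzw⟩ := h n hn
    exact_mod_cast eq_zero_or_eq_or_eq_or_eq_add_of_lt_four (by exact_mod_cast ha)
      (by exact_mod_cast hb) (by exact_mod_cast hn4) hxyzw
  have h1 := value_of_mem 1 (by simp) (by norm_num)
  have h2 := value_of_mem 2 (by simp) (by norm_num)
  obtain rfl : a = 1 := by omega
  have h3 := value_of_mem 3 (by simp) (by norm_num)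
  obtain rfl : b = 2 := by omega
  simpa using exists_eq_sq_add_two_mul_sq_add_four_mul
end
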